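/- arXiv:2402.18053 — 8 statements merged into one kernel-verified Lean document; each statement's English description precedes it below -/
import Mathlib

section
/- Let G be an edge-colored graph on n vertices and let k satisfy n ≥ k ≥ 4. If e(G) + c(G) ≥ (n choose 2) + t_{n,k-2} + 2, then G contains a rainbow copy of K_k, i.e., k vertices that are pairwise adjacent such that all (k choose 2) edges among them have pairwise distinct colors. -/
/-- `t_{n,r}`: the number of edges of the Turán graph, i.e. the complete `r`-partite
graph on `n` vertices with part sizes as balanced as possible. -/
noncomputable def turanEdges (n r : ℕ) : ℕ := Nat.card (SimpleGraph.turanGraph n r).edgeSet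

/-- `S` is the vertex set of a rainbow clique of `G`: the vertices of `S` are pairwise
adjacent and the coloring `C` is injective on the edges spanned by `S`. -/
def IsRainbowClique {V : Type*} (G : SimpleGraph V) (C : Sym2 V → ℕ) (S : Finset V) : Prop :=
  (∀ u ∈ S, ∀ v ∈ S, u ≠ v → G.Adj u v) ∧
  (∀ u ∈ S, ∀ v ∈ S, ∀ x ∈ S, ∀ y ∈ S, u ≠ v → x ≠ y →
    C s(u, v) = C s(x, y) → s(u, v) = s(x, y))

/-!
Write `r = k - 2` and induct on the number of vertices. For each vertex `v` choose a set `S v` of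
neighbours joined to `v` by one edge of each color occurring only at `v`. Deleting `v` costs
`deg v` edges and `#(S v)` colors, so the induction hypothesis applies unless
`deg v + #(S v)` is large for every `v`.

In that case rainbow cliques are built backwards: adding `v` to a rainbow clique inside `S v` gives
a rainbow clique, and since each `S v` misses at most `p = ⌊(n - 1) / r⌋` vertices this can be
iterated about `r` times. If `S v` is large for some `v`, there is room to start with a rainbow
triangle. Otherwise `n = r * p + 1`, `G` is complete and every complement of `S v` has exactly `p`
elements; as `p ∤ n`, these complements do not partition the vertices, so for some `w ∈ S v` the
complements of `S v` and `S w` meet, and the one vertex saved leaves room to start with an edge.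
-/

open Finset

section RainbowClique

variable {V : Type*} {G : SimpleGraph V} {C : Sym2 V → ℕ}

theorem isRainbowClique_iff {K : Finset V} :
    IsRainbowClique G C K ↔ G.IsClique K ∧ Set.InjOn C (G.edgeSet ∩ K.sym2) := by
  refine and_congr_right fun hclique ↦ ⟨fun hC ↦ ?_, fun hC u hu v hv x hx y hy huv hxy ↦ ?_⟩
  · rintro ⟨u, v⟩ ⟨huv, huvK⟩ ⟨x, y⟩ ⟨hxy, hxyK⟩
    obtain ⟨hu, hv⟩ := mk_mem_sym2_iff.1 huvK
    obtain ⟨hx, hy⟩ := mk_mem_sym2_iff.1 hxyK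
    exact hC u hu v hv x hx y hy huv.ne hxy.ne
  · exact hC ⟨hclique u hu v hv huv, mk_mem_sym2_iff.2 ⟨hu, hv⟩⟩
      ⟨hclique x hx y hy hxy, mk_mem_sym2_iff.2 ⟨hx, hy⟩⟩

theorem isRainbowClique_pair [DecidableEq V] {a b : V} (hab : G.Adj a b) :
    IsRainbowClique G C {a, b} := by
  have eq_of_mem : ∀ e ∈ G.edgeSet ∩ (({a, b} : Finset V).sym2 : Set (Sym2 V)), e = s(a, b) := by
    rintro ⟨x, y⟩ ⟨hxy, hmem⟩
    have hne : x ≠ y := G.ne_of_adj hxy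
    obtain ⟨hx, hy⟩ := mk_mem_sym2_iff.1 hmem
    grind
  refine isRainbowClique_iff.2 ⟨?_, fun e he f hf _ ↦ (eq_of_mem e he).trans (eq_of_mem f hf).symm⟩
  simpa [SimpleGraph.isClique_pair] using fun _ ↦ hab

theorem IsRainbowClique.map {W : Type*} (f : W ↪ V) {K : Finset W}
    (hK : IsRainbowClique (G.comap f) (C ∘ Sym2.map f) K) : IsRainbowClique G C (K.map f) := by
  obtain ⟨hclique, hC⟩ := isRainbowClique_iff.1 hK
  refine isRainbowClique_iff.2 ⟨?_, ?_⟩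
  · rw [coe_map]
    exact (hclique.map (f := f)).mono (SimpleGraph.map_comap_le f G)
  · have himage : G.edgeSet ∩ (K.map f).sym2 = Sym2.map f '' ((G.comap f).edgeSet ∩ K.sym2) := by
      have hcomap : (G.comap f).edgeSet = Sym2.map f ⁻¹' G.edgeSet := by
        ext ⟨x, y⟩
        rfl
      rw [sym2_map, coe_map, hcomap, Set.image_preimage_inter]
      rfl
    rw [himage]
    exact hC.image_of_comp

theorem isRainbowClique_univ_of_two_mul_choose_two_le [Fintype V]
    (h : 2 * (Fintype.card V).choose 2 ≤ G.edgeSet.ncard + (C '' G.edgeSet).ncard) :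
    IsRainbowClique G C univ := by
  classical
  have hedges : G.edgeSet.ncard ≤ (Fintype.card V).choose 2 := by
    rw [← SimpleGraph.coe_edgeFinset, Set.ncard_coe_finset]
    exact G.card_edgeFinset_le_card_choose_two
  have hcolors : (C '' G.edgeSet).ncard ≤ G.edgeSet.ncard := Set.ncard_image_le
  have htop : G = ⊤ := by
    refine SimpleGraph.edgeFinset_inj.1
      (eq_of_subset_of_card_le (SimpleGraph.edgeFinset_mono le_top) ?_)
    rw [SimpleGraph.card_edgeFinset_top_eq_card_choose_two, ← Set.ncard_coe_finset,
      SimpleGraph.coe_edgeFinset]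
    omega
  have hinj : Set.InjOn C G.edgeSet := Set.injOn_of_ncard_image_eq (by omega)
  refine isRainbowClique_iff.2 ⟨?_, hinj.mono Set.inter_subset_left⟩
  subst htop
  exact fun _ _ _ _ ↦ id

end RainbowClique

section Turan

theorem turanEdges_eq_choose_two {n r : ℕ} (h : n ≤ r) : turanEdges n r = n.choose 2 := by
  classical
  rw [turanEdges, SimpleGraph.turanGraph_eq_top.2 (Or.inr h), Nat.card_eq_fintype_card,
    ← SimpleGraph.edgeFinset_card, SimpleGraph.card_edgeFinset_top_eq_card_choose_two,
    Fintype.card_fin]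

theorem turanEdges_add_right (n r : ℕ) :
    turanEdges (n + r) r = turanEdges n r + n * (r - 1) + r.choose 2 := by
  simp only [turanEdges, Nat.card_eq_fintype_card, ← SimpleGraph.edgeFinset_card,
    SimpleGraph.card_edgeFinset_turanGraph_add]

theorem turanEdges_succ_add_div {r : ℕ} (hr : 0 < r) (n : ℕ) :
    turanEdges (n + 1) r + n / r = turanEdges n r + n := by
  induction n using Nat.strong_induction_on with
  | _ n ih =>
    obtain hn | hn := lt_or_ge n r
    · rw [turanEdges_eq_choose_two hn, turanEdges_eq_choose_two hn.le, Nat.div_eq_of_lt hn,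
        add_zero, Nat.choose_succ_succ' n 1, Nat.choose_one_right, add_comm]
    · obtain ⟨m, rfl⟩ := Nat.exists_eq_add_of_le' hn
      have := ih m (by omega)
      rw [add_right_comm, turanEdges_add_right, turanEdges_add_right, Nat.add_div_right _ hr,
        Nat.succ_mul m]
      omega

theorem turanEdges_add_two_self {r : ℕ} (hr : 2 ≤ r) :
    turanEdges (r + 2) r + 2 = (r + 2).choose 2 := by
  rw [add_comm r 2, turanEdges_add_right, turanEdges_eq_choose_two hr, add_comm 2 r,
    Nat.choose_succ_succ' (r + 1) 1, Nat.choose_succ_succ' r 1]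
  simp only [Nat.choose_one_right, Nat.choose_self, Nat.reduceAdd]
  omega

theorem choose_two_add_turanEdges_succ {r : ℕ} (hr : 0 < r) (n : ℕ) :
    (n + 1).choose 2 + turanEdges (n + 1) r + n / r = n.choose 2 + turanEdges n r + 2 * n := by
  have := turanEdges_succ_add_div hr n
  have : (n + 1).choose 2 = n + n.choose 2 := by
    rw [Nat.choose_succ_succ' n 1, Nat.choose_one_right]
  omega

end Turan

theorem card_add_card_le_card_inter_add_card_univ {V : Type*} [Fintype V] [DecidableEq V]
    (s t : Finset V) : #s + #t ≤ #(s ∩ t) + Fintype.card V := by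
  rw [← card_union_add_card_inter, add_comm]
  gcongr
  exact card_le_univ _

theorem dvd_card_of_disjoint_of_notMem {V : Type*} [Fintype V] {p : ℕ} {B : V → Finset V}
    (hself : ∀ v, v ∈ B v) (hcard : ∀ v, #(B v) = p)
    (hdisj : ∀ v w, w ∉ B v → Disjoint (B v) (B w)) : p ∣ Fintype.card V := by
  classical
  have mem_of_common {v w x : V} (hv : x ∈ B v) (hw : x ∈ B w) : w ∈ B v := by
    by_contra h
    exact disjoint_left.1 (hdisj v w h) hv hw
  have eq_of_common {v w x : V} (hv : x ∈ B v) (hw : x ∈ B w) : B w = B v := by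
    refine eq_of_subset_of_card_le (fun y hy ↦ ?_) (by rw [hcard, hcard])
    exact mem_of_common (mem_of_common hv hw) (mem_of_common (hself y) hy)
  have hpairwise : ((univ.image B : Finset (Finset V)) : Set (Finset V)).PairwiseDisjoint id := by
    rw [coe_image, coe_univ]
    rintro _ ⟨v, -, rfl⟩ _ ⟨w, -, rfl⟩ hne
    exact disjoint_left.2 fun x hv hw ↦ hne (eq_of_common hw hv)
  have hcover : (univ.image B).biUnion id = univ :=
    eq_univ_of_forall fun v ↦ by simpa using ⟨v, hself v⟩
  rw [← card_univ, ← hcover, card_biUnion hpairwise]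
  refine dvd_sum fun b hb ↦ ?_
  obtain ⟨v, -, rfl⟩ := mem_image.1 hb
  exact (hcard v).symm.dvd

section VertexDeletion

variable {V : Type*} (G : SimpleGraph V) (v : V)

theorem image_map_edgeSet_induce_compl_singleton :
    Sym2.map (↑) '' (G.induce {v}ᶜ).edgeSet = (G.deleteIncidenceSet v).edgeSet := by
  ext ⟨x, y⟩
  constructor
  · rintro ⟨⟨a, b⟩, hab, heq⟩
    have : (G.deleteIncidenceSet v).Adj a b :=
      SimpleGraph.deleteIncidenceSet_adj.2 ⟨hab, a.2, b.2⟩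
    rwa [← heq]
  · intro hxy
    obtain ⟨hadj, hx, hy⟩ := SimpleGraph.deleteIncidenceSet_adj.1 hxy
    exact ⟨s(⟨x, hx⟩, ⟨y, hy⟩), hadj, rfl⟩

theorem ncard_edgeSet_eq_induce_add_degree [Fintype V] [DecidableRel G.Adj] :
    G.edgeSet.ncard = (G.induce {v}ᶜ).edgeSet.ncard + G.degree v := by
  classical
  rw [← Set.ncard_image_of_injective _ (Sym2.map.injective Subtype.val_injective),
    image_map_edgeSet_induce_compl_singleton, SimpleGraph.edgeSet_deleteIncidenceSet,
    ← SimpleGraph.card_incidenceSet_eq_degree, ← Nat.card_eq_fintype_card, Nat.card_coe_set_eq,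
    Set.ncard_sdiff_add_ncard_of_subset (G.incidenceSet_subset v)]

end VertexDeletion

/-- `S` consists of neighbours of `v` joined to `v` by edges of pairwise distinct colors, none of
which occurs on an edge of `G` avoiding `v`. A largest such `S` has as many vertices as there are
colors lost by deleting `v`. -/
structure IsSaturatedStar {V α : Type*} (G : SimpleGraph V) (C : Sym2 V → α) (v : V)
    (S : Finset V) : Prop where
  adj : ∀ u ∈ S, G.Adj v u
  injOn : Set.InjOn (fun u ↦ C s(v, u)) S
  mem_of_color_eq : ∀ u ∈ S, ∀ e ∈ G.edgeSet, C e = C s(v, u) → v ∈ e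

section SaturatedStar

variable {V α : Type*}

theorem IsSaturatedStar.notMem {G : SimpleGraph V} {C : Sym2 V → α} {v : V} {S : Finset V}
    (hS : IsSaturatedStar G C v S) : v ∉ S :=
  fun hv ↦ (hS.adj v hv).ne rfl

theorem exists_isSaturatedStar [Finite V] (G : SimpleGraph V) (C : Sym2 V → α) (v : V) :
    ∃ S : Finset V, IsSaturatedStar G C v S ∧
      (C '' G.edgeSet).ncard = ((C ∘ Sym2.map (↑)) '' (G.induce {v}ᶜ).edgeSet).ncard + #S := by
  classical
  rw [Set.image_comp, image_map_edgeSet_induce_compl_singleton]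
  set lost : Set α := C '' G.edgeSet \ C '' (G.deleteIncidenceSet v).edgeSet with hlost
  have mem_of_lost {e : Sym2 V} (he : e ∈ G.edgeSet) (hC : C e ∈ lost) : v ∈ e := by
    by_contra hv
    refine hC.2 (Set.mem_image_of_mem C ?_)
    rw [SimpleGraph.edgeSet_deleteIncidenceSet]
    exact ⟨he, fun h ↦ hv h.2⟩
  have hsurj : Set.SurjOn (fun u ↦ C s(v, u)) (G.neighborSet v) lost := by
    rintro _ ⟨⟨e, he, rfl⟩, hnot⟩
    obtain ⟨u, rfl⟩ := mem_of_lost he ⟨⟨e, he, rfl⟩, hnot⟩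
    exact ⟨u, he, rfl⟩
  obtain ⟨S, hS, hbij⟩ := hsurj.exists_bijOn_subset
  lift S to Finset V using S.toFinite
  refine ⟨S, ⟨fun u hu ↦ hS hu, hbij.injOn, fun u hu e he heq ↦ ?_⟩, ?_⟩
  · exact mem_of_lost he (heq ▸ hbij.mapsTo hu)
  · have hsub : C '' (G.deleteIncidenceSet v).edgeSet ⊆ C '' G.edgeSet :=
      Set.image_mono (SimpleGraph.edgeSet_mono (G.deleteIncidenceSet_le v))
    rw [← Set.ncard_coe_finset S, ← hbij.injOn.ncard_image, hbij.image_eq, add_comm, hlost,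
      Set.ncard_sdiff_add_ncard_of_subset hsub]

end SaturatedStar

section Extension

variable {V : Type*} {G : SimpleGraph V} {C : Sym2 V → ℕ}

theorem IsSaturatedStar.isRainbowClique_insert [DecidableEq V] {v : V} {S K : Finset V}
    (hS : IsSaturatedStar G C v S) (hKS : K ⊆ S) (hK : IsRainbowClique G C K) :
    IsRainbowClique G C (insert v K) := by
  obtain ⟨hclique, hC⟩ := isRainbowClique_iff.1 hK
  have edge_at {e : Sym2 V} (he : e ∈ G.edgeSet ∩ ((insert v K).sym2 : Set (Sym2 V)))
      (hv : v ∈ e) : ∃ u ∈ K, e = s(v, u) := by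
    obtain ⟨u, rfl⟩ := hv
    have hu : u ∈ insert v K := mem_sym2_iff.1 he.2 u (Sym2.mem_mk_right v u)
    exact ⟨u, mem_of_mem_insert_of_ne hu (G.ne_of_adj he.1).symm, rfl⟩
  have edge_avoiding {e : Sym2 V} (he : e ∈ G.edgeSet ∩ ((insert v K).sym2 : Set (Sym2 V)))
      (hv : v ∉ e) : e ∈ G.edgeSet ∩ (K.sym2 : Set (Sym2 V)) :=
    ⟨he.1, mem_sym2_iff.2 fun u hu ↦
      mem_of_mem_insert_of_ne (mem_sym2_iff.1 he.2 u hu) fun h ↦ hv (h ▸ hu)⟩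
  refine isRainbowClique_iff.2 ⟨?_, fun e he f hf hef ↦ ?_⟩
  · rw [coe_insert]
    exact hclique.insert fun u hu _ ↦ hS.adj u (hKS hu)
  by_cases hve : v ∈ e <;> by_cases hvf : v ∈ f
  · obtain ⟨u, hu, rfl⟩ := edge_at he hve
    obtain ⟨w, hw, rfl⟩ := edge_at hf hvf
    rw [hS.injOn (hKS hu) (hKS hw) hef]
  · obtain ⟨u, hu, rfl⟩ := edge_at he hve
    exact absurd (hS.mem_of_color_eq u (hKS hu) f hf.1 hef.symm) hvf
  · obtain ⟨u, hu, rfl⟩ := edge_at hf hvf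
    exact absurd (hS.mem_of_color_eq u (hKS hu) e he.1 hef) hve
  · exact hC (edge_avoiding he hve) (edge_avoiding hf hvf) hef

/-- Every set of at least `q` vertices contains a rainbow clique on `m` vertices. This is what is
propagated when cliques grow one vertex at a time: a larger `m` is paid for by a larger `q`. -/
def ForcesRainbowClique (G : SimpleGraph V) (C : Sym2 V → ℕ) (q m : ℕ) : Prop :=
  ∀ W : Finset V, q ≤ #W → ∃ K ⊆ W, #K = m ∧ IsRainbowClique G C K

theorem forcesRainbowClique_top : ForcesRainbowClique (⊤ : SimpleGraph V) C 2 2 := by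
  classical
  intro W hW
  obtain ⟨a, ha, b, hb, hab⟩ := one_lt_card.1 hW
  exact ⟨{a, b}, by simp [insert_subset_iff, ha, hb], card_pair hab, isRainbowClique_pair hab⟩

namespace ForcesRainbowClique

variable {q m : ℕ}

theorem exists_insert [DecidableEq V] (h : ForcesRainbowClique G C q m) {v : V}
    {S W : Finset V} (hS : IsSaturatedStar G C v S) (hv : v ∈ W) (hq : q ≤ #(W ∩ S)) :
    ∃ K ⊆ W, #K = m + 1 ∧ IsRainbowClique G C K := by
  obtain ⟨K, hKWS, rfl, hK⟩ := h _ hq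
  obtain ⟨hKW, hKS⟩ := subset_inter_iff.1 hKWS
  exact ⟨insert v K, insert_subset hv hKW, card_insert_of_notMem (notMem_mono hKS hS.notMem),
    hS.isRainbowClique_insert hKS hK⟩

variable [Fintype V] {S : V → Finset V} {p : ℕ}

theorem add_of_isSaturatedStar (h : ForcesRainbowClique G C q m) (hq : 0 < q)
    (hS : ∀ v, IsSaturatedStar G C v (S v)) (hcard : ∀ v, Fintype.card V ≤ #(S v) + p) (j : ℕ) :
    ForcesRainbowClique G C (q + j * p) (m + j) := by
  classical
  induction j with
  | zero => simpa using h
  | succ j ih =>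
    intro W hW
    obtain ⟨v, hv⟩ : W.Nonempty := card_pos.1 (by omega)
    refine ih.exists_insert (hS v) hv ?_
    have := card_add_card_le_card_inter_add_card_univ W (S v)
    have := hcard v
    linarith

end ForcesRainbowClique

end Extension

theorem card_le_card_add_of_two_mul_card_le {V : Type*} [Fintype V] {G : SimpleGraph V}
    [DecidableRel G.Adj] {v : V} {s : Finset V} {p : ℕ}
    (h : 2 * Fintype.card V ≤ #s + G.degree v + p + 1) : Fintype.card V ≤ #s + p := by
  have := G.degree_lt_card_verts v
  omega

section DegreeCondition

variable {V : Type*} [Fintype V] {G : SimpleGraph V} [DecidableRel G.Adj] {C : Sym2 V → ℕ}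
  {S : V → Finset V} {p r : ℕ}

theorem forcesRainbowClique_three (hS : ∀ v, IsSaturatedStar G C v (S v))
    (hdeg : ∀ v, 2 * Fintype.card V ≤ #(S v) + G.degree v + p + 1) :
    ForcesRainbowClique G C (p + 2) 3 := by
  classical
  intro W hW
  have hne : W.Nonempty := card_pos.1 (by omega)
  -- By maximality of `v`, if `W ∩ S v` is independent then any `a` in it has too small a degree.
  obtain ⟨v, hv, hmax⟩ := exists_max_image W (fun v ↦ #(W ∩ S v)) hne
  suffices hadj : ∃ a ∈ W ∩ S v, ∃ b ∈ W ∩ S v, G.Adj a b by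
    obtain ⟨a, ha, b, hb, hab⟩ := hadj
    obtain ⟨haW, haS⟩ := mem_inter.1 ha
    obtain ⟨hbW, hbS⟩ := mem_inter.1 hb
    have hsub : {a, b} ⊆ S v := insert_subset haS (singleton_subset_iff.2 hbS)
    exact ⟨insert v {a, b}, insert_subset hv (insert_subset haW (singleton_subset_iff.2 hbW)),
      by rw [card_insert_of_notMem (notMem_mono hsub (hS v).notMem), card_pair hab.ne],
      (hS v).isRainbowClique_insert hsub (isRainbowClique_pair hab)⟩
  by_contra! hindep
  obtain ⟨a, ha⟩ : (W ∩ S v).Nonempty := by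
    have := card_add_card_le_card_inter_add_card_univ W (S v)
    have := card_le_card_add_of_two_mul_card_le (hdeg v)
    exact card_pos.1 (by omega)
  have hdisj : Disjoint (W ∩ S v) (G.neighborFinset a) :=
    disjoint_left.2 fun b hb hab ↦ hindep a ha b hb ((G.mem_neighborFinset a b).1 hab)
  have hunion := (card_union_of_disjoint hdisj).symm.trans_le (card_le_univ _)
  rw [G.card_neighborFinset_eq_degree] at hunion
  have := card_add_card_le_card_inter_add_card_univ W (S a)
  have := hmax a (mem_of_mem_inter_left ha)
  have := hdeg a
  omega

theorem exists_isRainbowClique_of_le_card_star_add (hr : 2 ≤ r)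
    (hS : ∀ v, IsSaturatedStar G C v (S v))
    (hdeg : ∀ v, 2 * Fintype.card V ≤ #(S v) + G.degree v + p + 1) {v : V}
    (hv : r * p + 2 ≤ #(S v) + p) :
    ∃ K : Finset V, #K = r + 2 ∧ IsRainbowClique G C K := by
  classical
  obtain ⟨j, rfl⟩ := Nat.exists_eq_add_of_le' hr
  have hforces : ForcesRainbowClique G C (p + 2 + j * p) (3 + j) :=
    (forcesRainbowClique_three hS hdeg).add_of_isSaturatedStar (by omega) hS
      (fun v ↦ card_le_card_add_of_two_mul_card_le (hdeg v)) j
  obtain ⟨K, -, hcard, hK⟩ :=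
    hforces.exists_insert (hS v) (mem_univ v) (by rw [univ_inter]; linarith)
  exact ⟨K, by omega, hK⟩

end DegreeCondition

section Tight

variable {V : Type*} [Fintype V] [DecidableEq V] {S : V → Finset V} {p : ℕ}

theorem exists_mem_star_inter_compl_nonempty {α : Type*} {G : SimpleGraph V} {C : Sym2 V → α}
    (hS : ∀ v, IsSaturatedStar G C v (S v))
    (hcard : ∀ v, #(S v)ᶜ = p) (hp : ¬ p ∣ Fintype.card V) :
    ∃ v, ∃ w ∈ S v, ((S v)ᶜ ∩ (S w)ᶜ).Nonempty := by
  by_contra! hempty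
  refine hp (dvd_card_of_disjoint_of_notMem (B := fun v ↦ (S v)ᶜ) (fun v ↦ ?_) hcard
    fun v w hw ↦ disjoint_iff_inter_eq_empty.2 (hempty v w (by simpa using hw)))
  exact mem_compl.2 (hS v).notMem

theorem exists_isRainbowClique_top_of_card_compl_star_eq {C : Sym2 V → ℕ} {r : ℕ}
    (hr : 2 ≤ r) (hp : p ≠ 1) (hS : ∀ v, IsSaturatedStar ⊤ C v (S v)) (hcard : ∀ v, #(S v)ᶜ = p)
    (hV : Fintype.card V = r * p + 1) :
    ∃ K : Finset V, #K = r + 2 ∧ IsRainbowClique ⊤ C K := by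
  have hdvd : ¬ p ∣ Fintype.card V := by
    rwa [hV, Nat.dvd_add_right (dvd_mul_left p r), Nat.dvd_one]
  obtain ⟨v, w, hw, hoverlap⟩ := exists_mem_star_inter_compl_nonempty hS hcard hdvd
  obtain ⟨j, rfl⟩ := Nat.exists_eq_add_of_le' hr
  have hinter : 2 + j * p ≤ #(S v ∩ S w) := by
    have hpos := hoverlap.card_pos
    have hunion := card_union_add_card_inter (S v)ᶜ (S w)ᶜ
    rw [← compl_inter, hcard, hcard] at hunion
    have := card_add_card_compl (S v ∩ S w)
    linarith
  have hforces : ForcesRainbowClique ⊤ C (2 + j * p) (2 + j) :=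
    forcesRainbowClique_top.add_of_isSaturatedStar two_pos hS
      (fun v ↦ by rw [← hcard v, card_add_card_compl]) j
  obtain ⟨K, hKv, hKcard, hK⟩ := hforces.exists_insert (hS w) hw hinter
  exact ⟨insert v K, by rw [card_insert_of_notMem (notMem_mono hKv (hS v).notMem)]; omega,
    (hS v).isRainbowClique_insert hKv hK⟩

end Tight

theorem exists_isRainbowClique_of_two_mul_card_le {V : Type*} [Fintype V] {G : SimpleGraph V}
    [DecidableRel G.Adj] {C : Sym2 V → ℕ} {S : V → Finset V} {p r : ℕ} (hr : 2 ≤ r)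
    (hrp : r * p < Fintype.card V) (hrV : r + 1 < Fintype.card V)
    (hS : ∀ v, IsSaturatedStar G C v (S v))
    (hdeg : ∀ v, 2 * Fintype.card V ≤ #(S v) + G.degree v + p + 1) :
    ∃ K : Finset V, #K = r + 2 ∧ IsRainbowClique G C K := by
  classical
  by_cases hlarge : ∃ v, r * p + 2 ≤ #(S v) + p
  · obtain ⟨v, hv⟩ := hlarge
    exact exists_isRainbowClique_of_le_card_star_add hr hS hdeg hv
  push Not at hlarge
  have hstar v : Fintype.card V ≤ #(S v) + p := card_le_card_add_of_two_mul_card_le (hdeg v)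
  obtain ⟨v₀⟩ : Nonempty V := Fintype.card_pos_iff.1 (by omega)
  have hV : Fintype.card V = r * p + 1 := by
    have := hstar v₀
    have := hlarge v₀
    omega
  have hcompl v : #(S v)ᶜ = p := by
    have := hstar v
    have := hlarge v
    have := card_add_card_compl (S v)
    omega
  have htop : G = ⊤ := SimpleGraph.eq_top_iff_forall_isUniversal.2 fun v ↦ by
    rw [← G.degree_eq_card_sub_one]
    have := G.degree_lt_card_verts v
    have := hdeg v
    have := hlarge v
    omega
  have hp : p ≠ 1 := by
    rintro rfl
    omega
  subst htop
  exact exists_isRainbowClique_top_of_card_compl_star_eq hr hp hS hcompl hV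

/-- If `e(G) + c(G) ≥ (n choose 2) + t_{n,k-2} + 2` with `n ≥ k ≥ 4`,
then `G` contains a rainbow `K_k`. -/
theorem rainbow_clique_of_edges_add_colors {V : Type*} [Fintype V] (n k : ℕ)
    (hV : Fintype.card V = n) (hk : 4 ≤ k) (hkn : k ≤ n)
    (G : SimpleGraph V) (C : Sym2 V → ℕ)
    (h : Nat.card G.edgeSet + Nat.card (C '' G.edgeSet)
      ≥ n.choose 2 + turanEdges n (k - 2) + 2) :
    ∃ S : Finset V, S.card = k ∧ IsRainbowClique G C S := by
  classical
  obtain ⟨r, rfl⟩ := Nat.exists_eq_add_of_le' (show 2 ≤ k by omega)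
  have hr : 2 ≤ r := by omega
  simp only [Nat.card_coe_set_eq, Nat.add_sub_cancel] at h
  induction n, hkn using Nat.le_induction generalizing V with
  | base =>
    have := turanEdges_add_two_self hr
    exact ⟨univ, by rw [card_univ, hV],
      isRainbowClique_univ_of_two_mul_choose_two_le (by rw [hV]; omega)⟩
  | succ n hn ih =>
    choose S hS hcolors using exists_isSaturatedStar G C
    by_cases hsmall : ∃ v, #(S v) + G.degree v + n / r ≤ 2 * n
    · obtain ⟨v, hv⟩ := hsmall
      have hcompl : Fintype.card ({v}ᶜ : Set V) = n := by
        rw [Fintype.card_compl_set, hV, Fintype.card_unique, Nat.add_sub_cancel]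
      have hedges := ncard_edgeSet_eq_induce_add_degree G v
      have hthreshold := choose_two_add_turanEdges_succ (two_pos.trans_le hr) n
      obtain ⟨K, hcard, hK⟩ := ih hcompl (G.induce {v}ᶜ) (C ∘ Sym2.map (↑))
        (by have := hcolors v; omega)
      exact ⟨K.map (.subtype _), by rw [card_map, hcard], hK.map _⟩
    · push Not at hsmall
      have hrp : r * (n / r) < Fintype.card V := hV ▸ Nat.lt_add_one_of_le (Nat.mul_div_le n r)
      exact exists_isRainbowClique_of_two_mul_card_le hr hrp (by omega) hS
        fun v ↦ by have := hsmall v; omega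
end

section
/- Let m ≥ 1 and let G be an edge-colored graph on n ≥ 3m vertices. If e(G) + c(G) ≥ ((n - 3(m-1)) choose 2) + (n - 3(m-1)) + 3(m-1)(2n-1) - 9(m-1)^2, then G contains m pairwise vertex-disjoint rainbow triangles. -/
/-!
The deficit of the subgraph induced on `w` vertices is `w(w-1) - e - c`, its distance to a complete
graph with all edges of different colors. A vertex is incident to at most `w - 1` edges, and at most
as many colors are saturated by it, that is, occur only on edges at it. So the deficit does not grow
when vertices are removed.

If there is no rainbow triangle, some vertex has at most `w` incident edges and saturated colors
together. Indeed, let `v` saturate the most colors and let `vu` be an edge of a saturated color.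
Every other color saturated by `v` appears on some edge `vx`, and `x` is not adjacent to `u`, since
`v, u, x` would form a rainbow triangle. So the degree of `u` plus the number of colors saturated by
`v` is at most `w`, and `u` saturates no more colors than `v`. Removing such vertices one at a time
shows that the deficit exceeds `w(w-3)/2`.

With `t = n - 3(m-1)`, the hypothesis says exactly that the deficit of `G` is at most `t(t-3)/2`.
Hence every set of at least `t` vertices contains a rainbow triangle, and `m` disjoint ones can be
chosen greedily.
-/

open Finset

theorem exists_pairwise_disjoint_of_forall_exists_subset {V : Type*}
    {P : Finset V → Prop} {r t m : ℕ} {U : Finset V}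
    (hP : ∀ W ⊆ U, t ≤ #W → ∃ S ⊆ W, #S ≤ r ∧ P S) (hU : t + r * m ≤ #U + r) :
    ∃ S : Fin m → Finset V, (∀ i, S i ⊆ U) ∧ (∀ i, P (S i)) ∧
      ∀ i j, i ≠ j → Disjoint (S i) (S j) := by
  classical
  induction m generalizing U with
  | zero => exact ⟨Fin.elim0, Fin.rec0, Fin.rec0, Fin.rec0⟩
  | succ m ih =>
    rw [Nat.mul_succ] at hU
    obtain ⟨T, hTU, hTr, hPT⟩ := hP U Subset.rfl (by omega)
    have card_sdiff : #(U \ T) + #T = #U := card_sdiff_add_card_eq_card hTU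
    obtain ⟨S, hSU, hPS, hS⟩ := ih (U := U \ T)
      (fun W hW => hP W (hW.trans sdiff_subset)) (by omega)
    have disjoint_T (i) : Disjoint T (S i) := disjoint_sdiff.mono_right (hSU i)
    refine ⟨Fin.cons T S, ?_, ?_, ?_⟩
    · exact Fin.cases hTU fun i => (hSU i).trans sdiff_subset
    · exact Fin.cases hPT hPS
    · simp only [Fin.forall_fin_succ, Fin.cons_zero, Fin.cons_succ, ne_eq, Fin.succ_inj]
      exact ⟨⟨fun h => absurd trivial h, fun i _ => disjoint_T i⟩,
        fun i => ⟨fun _ => (disjoint_T i).symm, hS i⟩⟩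

section EdgesAndColors

variable {V α : Type*} (G : SimpleGraph V) [DecidableRel G.Adj]

/-- The edges of the subgraph of `G` induced on `W`, as edges of `G`, so that a coloring of `G`
applies to them. -/
def edgesIn (W : Finset V) : Finset (Sym2 V) :=
  {e ∈ W.sym2 | e ∈ G.edgeSet}

/-- The neighbors of `v` in `W`. The vertex `v` itself need not lie in `W`. -/
def neighborsIn (W : Finset V) (v : V) : Finset V :=
  {u ∈ W | G.Adj v u}

/-- The colors of the edges of the subgraph of `G` induced on `W`. -/
def colorsIn [DecidableEq α] (C : Sym2 V → α) (W : Finset V) : Finset α :=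
  (edgesIn G W).image C

/-- The colors *saturated* by `v`: those that occur in the subgraph induced on `W`, but only on
edges at `v`. -/
def saturatedColors [DecidableEq V] [DecidableEq α] (C : Sym2 V → α) (W : Finset V) (v : V) :
    Finset α :=
  colorsIn G C W \ colorsIn G C (W.erase v)

/-- The amount by which `e + c`, for the subgraph of `G` induced on `W`, falls short of its value
`2 * (#W).choose 2` on a complete graph with all edges of different colors. It is an integer so
that no subtraction is truncated. -/
def deficit [DecidableEq α] (C : Sym2 V → α) (W : Finset V) : ℤ :=
  #W * (#W - 1) - (#(edgesIn G W) + #(colorsIn G C W))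

variable {G} {W : Finset V} {u v x y : V}

lemma mk_mem_edgesIn : s(x, y) ∈ edgesIn G W ↔ x ∈ W ∧ y ∈ W ∧ G.Adj x y := by
  simp [edgesIn, and_assoc]

lemma coe_edgesIn_univ [Fintype V] : (edgesIn G univ : Set (Sym2 V)) = G.edgeSet := by
  ext
  simp [edgesIn]

lemma mem_neighborsIn : u ∈ neighborsIn G W v ↔ u ∈ W ∧ G.Adj v u :=
  mem_filter

lemma neighborsIn_subset : neighborsIn G W v ⊆ W :=
  filter_subset _ _

lemma card_neighborsIn_lt (hv : v ∈ W) : #(neighborsIn G W v) < #W :=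
  card_lt_card <| filter_ssubset.2 ⟨v, hv, G.irrefl⟩

variable [DecidableEq V]

lemma edgesIn_subset_union (v : V) :
    edgesIn G W ⊆ edgesIn G (W.erase v) ∪ (neighborsIn G W v).image (s(v, ·)) := by
  intro e he
  induction e with | _ x y
  simp only [mem_union, mk_mem_edgesIn, mem_image, mem_neighborsIn, mem_erase] at he ⊢
  grind [SimpleGraph.Adj.symm, Sym2.eq_swap]

variable (G) in
lemma card_edgesIn_le (W : Finset V) (v : V) :
    #(edgesIn G W) ≤ #(edgesIn G (W.erase v)) + #(neighborsIn G W v) := calc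
  _ ≤ #(edgesIn G (W.erase v) ∪ (neighborsIn G W v).image (s(v, ·))) :=
    card_le_card (edgesIn_subset_union v)
  _ ≤ #(edgesIn G (W.erase v)) + #((neighborsIn G W v).image (s(v, ·))) := card_union_le _ _
  _ ≤ #(edgesIn G (W.erase v)) + #(neighborsIn G W v) := Nat.add_le_add_left card_image_le _

variable [DecidableEq α] {C : Sym2 V → α} {c : α}

lemma exists_mem_neighborsIn_of_mem_saturatedColors (hc : c ∈ saturatedColors G C W v) :
    ∃ u ∈ neighborsIn G W v, C s(v, u) = c := by
  obtain ⟨hcW, hcv⟩ := mem_sdiff.1 hc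
  obtain ⟨e, he, rfl⟩ := mem_image.1 hcW
  rcases mem_union.1 (edgesIn_subset_union v he) with he | he
  · exact absurd (mem_image_of_mem C he) hcv
  · obtain ⟨u, hu, rfl⟩ := mem_image.1 he
    exact ⟨u, hu, rfl⟩

lemma ne_of_mem_saturatedColors (hc : c ∈ saturatedColors G C W v) (hx : x ∈ neighborsIn G W v)
    (hy : y ∈ neighborsIn G W v) (hxy : G.Adj x y) : c ≠ C s(x, y) := by
  rintro rfl
  rw [mem_neighborsIn] at hx hy
  exact (mem_sdiff.1 hc).2 <| mem_image_of_mem C <| mk_mem_edgesIn.2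
    ⟨mem_erase.2 ⟨hx.2.ne', hx.1⟩, mem_erase.2 ⟨hy.2.ne', hy.1⟩, hxy⟩

variable (G C)

lemma card_saturatedColors_le_card_neighborsIn (W : Finset V) (v : V) :
    #(saturatedColors G C W v) ≤ #(neighborsIn G W v) :=
  card_le_card_of_surjOn (C s(v, ·)) fun _ => exists_mem_neighborsIn_of_mem_saturatedColors

lemma card_colorsIn_le (W : Finset V) (v : V) :
    #(colorsIn G C W) ≤ #(saturatedColors G C W v) + #(colorsIn G C (W.erase v)) :=
  card_le_card_sdiff_add_card

lemma deficit_erase_add_le (hv : v ∈ W) :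
    deficit G C (W.erase v) + 2 * (#W - 1)
      - (#(neighborsIn G W v) + #(saturatedColors G C W v)) ≤ deficit G C W := by
  have edges_le := card_edgesIn_le G W v
  have colors_le := card_colorsIn_le G C W v
  have card_erase := card_erase_add_one hv
  unfold deficit
  zify at *
  rw [← card_erase]
  linarith

end EdgesAndColors

section Deficit

variable {V α : Type*} [DecidableEq α] (G : SimpleGraph V) [DecidableRel G.Adj] (C : Sym2 V → α)

lemma deficit_univ [Fintype V] :
    deficit G C univ = Fintype.card V * (Fintype.card V - 1)
      - (Nat.card G.edgeSet + Nat.card (C '' G.edgeSet) : ℕ) := by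
  simp only [deficit, colorsIn, ← coe_edgesIn_univ, ← coe_image, Nat.card_coe_set_eq,
    Set.ncard_coe_finset, card_univ, Nat.cast_add]

theorem deficit_mono : Monotone (deficit G C) := by
  classical
  refine monotone_iff_forall_le_insert.2 fun W v hv => ?_
  have step := deficit_erase_add_le G C (mem_insert_self v W)
  rw [erase_insert hv] at step
  have degree_lt := card_neighborsIn_lt (G := G) (mem_insert_self v W)
  have saturated_le := card_saturatedColors_le_card_neighborsIn G C (insert v W) v
  lia

lemma deficit_nonneg (W : Finset V) : 0 ≤ deficit G C W := calc
  0 = deficit G C ∅ := by simp [deficit, colorsIn, edgesIn]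
  _ ≤ deficit G C W := deficit_mono G C (empty_subset W)

end Deficit

section RainbowTriangles

variable {V : Type*} {G : SimpleGraph V} {C : Sym2 V → ℕ} {W : Finset V} {u v x y z : V}

/-- `G` has no rainbow triangle inside `W`; a triangle is given by its set of three vertices. -/
def RainbowTriangleFreeOn (G : SimpleGraph V) (C : Sym2 V → ℕ) (W : Finset V) : Prop :=
  ∀ T ⊆ W, #T = 3 → ¬ IsRainbowClique G C T

lemma isRainbowClique_triple [DecidableEq V] (hxy : G.Adj x y) (hxz : G.Adj x z)
    (hyz : G.Adj y z) (hx : C s(x, y) ≠ C s(x, z)) (hy : C s(x, y) ≠ C s(y, z))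
    (hz : C s(x, z) ≠ C s(y, z)) : IsRainbowClique G C {x, y, z} := by
  have edge_cases : ∀ a ∈ ({x, y, z} : Finset V), ∀ b ∈ ({x, y, z} : Finset V), a ≠ b →
      s(a, b) = s(x, y) ∨ s(a, b) = s(x, z) ∨ s(a, b) = s(y, z) := by
    simp
  constructor
  · intro a ha b hb hab
    rw [← SimpleGraph.mem_edgeSet]
    rcases edge_cases a ha b hb hab with h | h | h <;> rwa [h]
  · intro a ha b hb c hc d hd hab hcd hcolor
    rcases edge_cases a ha b hb hab with h | h | h <;>
      rcases edge_cases c hc d hd hcd with h' | h' | h' <;>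
      rw [h, h'] at hcolor ⊢ <;> tauto

variable [DecidableRel G.Adj]

lemma not_adj_of_mem_saturatedColors [DecidableEq V] (hW : RainbowTriangleFreeOn G C W)
    (hv : v ∈ W) (hx : x ∈ neighborsIn G W v) (hy : y ∈ neighborsIn G W v)
    (hxsat : C s(v, x) ∈ saturatedColors G C W v) (hysat : C s(v, y) ∈ saturatedColors G C W v)
    (hne : C s(v, x) ≠ C s(v, y)) : ¬ G.Adj x y := by
  intro hxy
  obtain ⟨hxW, hvx⟩ := mem_neighborsIn.1 hx
  obtain ⟨hyW, hvy⟩ := mem_neighborsIn.1 hy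
  refine hW {v, x, y} (by grind) (card_eq_three.2 ⟨v, x, y, hvx.ne, hvy.ne, hxy.ne, rfl⟩) ?_
  exact isRainbowClique_triple hvx hvy hxy hne (ne_of_mem_saturatedColors hxsat hx hy hxy)
    (ne_of_mem_saturatedColors hysat hx hy hxy)

lemma card_neighborsIn_add_card_saturatedColors_le [DecidableEq V]
    (hW : RainbowTriangleFreeOn G C W) (hv : v ∈ W) (hu : u ∈ neighborsIn G W v)
    (husat : C s(v, u) ∈ saturatedColors G C W v) :
    #(neighborsIn G W u) + #(saturatedColors G C W v) ≤ #W := by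
  have saturated_surjOn : Set.SurjOn (C s(v, ·)) (W \ neighborsIn G W u : Finset V)
      (saturatedColors G C W v) := by
    intro c hc
    by_cases huc : C s(v, u) = c
    · exact ⟨u, by simp_all [mem_neighborsIn], huc⟩
    obtain ⟨x, hx, rfl⟩ := exists_mem_neighborsIn_of_mem_saturatedColors hc
    have hux := not_adj_of_mem_saturatedColors hW hv hu hx husat hc huc
    exact ⟨x, by simp_all [mem_neighborsIn], rfl⟩
  have saturated_le := card_le_card_of_surjOn _ saturated_surjOn
  have card_compl := card_sdiff_add_card_eq_card (neighborsIn_subset : neighborsIn G W u ⊆ W)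
  omega

lemma exists_card_neighborsIn_add_card_saturatedColors_le [DecidableEq V]
    (hW : RainbowTriangleFreeOn G C W) (hne : W.Nonempty) :
    ∃ v ∈ W, #(neighborsIn G W v) + #(saturatedColors G C W v) ≤ #W := by
  obtain ⟨v, hv, hmax⟩ := W.exists_max_image (fun v => #(saturatedColors G C W v)) hne
  rcases (saturatedColors G C W v).eq_empty_or_nonempty with hsat | ⟨c, hc⟩
  · exact ⟨v, hv, by simpa [hsat] using (card_neighborsIn_lt hv).le⟩
  · obtain ⟨u, hu, rfl⟩ := exists_mem_neighborsIn_of_mem_saturatedColors hc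
    have huW := (mem_neighborsIn.1 hu).1
    refine ⟨u, huW, ?_⟩
    calc #(neighborsIn G W u) + #(saturatedColors G C W u)
      _ ≤ #(neighborsIn G W u) + #(saturatedColors G C W v) := Nat.add_le_add_left (hmax u huW) _
      _ ≤ #W := card_neighborsIn_add_card_saturatedColors_le hW hv hu hc

theorem card_mul_card_sub_three_lt_two_mul_deficit (hW : RainbowTriangleFreeOn G C W)
    (hne : W.Nonempty) : (#W * (#W - 3) : ℤ) < 2 * deficit G C W := by
  classical
  induction W using Finset.strongInduction with
  | H W ih =>
    obtain ⟨v, hv, hlow⟩ := exists_card_neighborsIn_add_card_saturatedColors_le hW hne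
    rcases (W.erase v).eq_empty_or_nonempty with hempty | hne'
    · have card_eq : #W = 1 := by rw [← card_erase_add_one hv, hempty, card_empty]
      have nonneg := deficit_nonneg G C W
      rw [card_eq]
      lia
    · have free_erase : RainbowTriangleFreeOn G C (W.erase v) :=
        fun T hT => hW T (hT.trans (erase_subset v W))
      have lt_deficit_erase := ih (W.erase v) (erase_ssubset hv) free_erase hne'
      have step := deficit_erase_add_le G C hv
      have card_erase := card_erase_add_one hv
      zify at hlow card_erase
      rw [← card_erase] at hlow step ⊢
      linarith

theorem exists_rainbow_triangle_of_two_mul_deficit_le (hne : W.Nonempty)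
    (h : 2 * deficit G C W ≤ #W * (#W - 3)) : ∃ T ⊆ W, #T = 3 ∧ IsRainbowClique G C T := by
  by_contra! hfree
  exact (card_mul_card_sub_three_lt_two_mul_deficit hfree hne).not_ge h

end RainbowTriangles

lemma two_mul_sub_le_of_choose_two_add_le {n r s : ℕ} (hn : 0 < n) (hr : r ≤ n)
    (h : (n - r).choose 2 + (n - r) + (r * (2 * n - 1) - r ^ 2) ≤ s) :
    2 * (n * (n - 1) - s : ℤ) ≤ (n - r : ℕ) * ((n - r : ℕ) - 3) := by
  -- With `t = n - r`, the left side of `h` is `n * (n - 1) - t * (t - 1) + t * (t + 1) / 2`.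
  obtain ⟨t, rfl⟩ := Nat.exists_eq_add_of_le hr
  have pow_le : r ^ 2 ≤ r * (2 * (r + t) - 1) := by
    rw [pow_two]
    gcongr
    omega
  have choose_eq : (2 * t.choose 2 : ℚ) = t * (t - 1) := by rw [Nat.cast_choose_two]; ring
  have one_le : 1 ≤ 2 * (r + t) := by omega
  rw [Nat.add_sub_cancel_left] at *
  qify [pow_le, one_le] at h ⊢
  linarith

/-- If `m ≥ 1`, `n ≥ 3m` and
`e(G) + c(G) ≥ C(n-3(m-1), 2) + (n-3(m-1)) + 3(m-1)(2n-1) - 9(m-1)²`,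
then `G` contains `m` pairwise vertex-disjoint rainbow triangles. -/
theorem disjoint_rainbow_triangles_of_edges_add_colors {V : Type*} [Fintype V] (n m : ℕ)
    (hm : 1 ≤ m) (hV : Fintype.card V = n) (hn : 3 * m ≤ n)
    (G : SimpleGraph V) (C : Sym2 V → ℕ)
    (h : Nat.card G.edgeSet + Nat.card (C '' G.edgeSet)
      ≥ (n - 3 * (m - 1)).choose 2 + (n - 3 * (m - 1))
        + (3 * (m - 1) * (2 * n - 1) - 9 * (m - 1) ^ 2)) :
    ∃ S : Fin m → Finset V, (∀ i, (S i).card = 3) ∧ (∀ i, IsRainbowClique G C (S i)) ∧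
      ∀ i j, i ≠ j → Disjoint (S i) (S j) := by
  classical
  set t := n - 3 * (m - 1) with ht
  have deficit_le : 2 * deficit G C univ ≤ t * (t - 3) := by
    rw [deficit_univ, hV, ht]
    exact two_mul_sub_le_of_choose_two_add_le (by omega) (by omega) (by simpa [mul_pow] using h)
  have exists_triangle (W : Finset V) (hW : t ≤ #W) :
      ∃ T ⊆ W, #T ≤ 3 ∧ #T = 3 ∧ IsRainbowClique G C T := by
    obtain ⟨T, hTW, hT, hrainbow⟩ := exists_rainbow_triangle_of_two_mul_deficit_le
      (G := G) (C := C) (W := W) (card_pos.1 (by omega)) <| calc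
        2 * deficit G C W
        _ ≤ 2 * deficit G C univ := by gcongr; exact deficit_mono G C (subset_univ W)
        _ ≤ t * (t - 3) := deficit_le
        _ ≤ #W * (#W - 3) := by gcongr; omega
    exact ⟨T, hTW, hT.le, hT, hrainbow⟩
  obtain ⟨S, -, hS, hdisjoint⟩ := exists_pairwise_disjoint_of_forall_exists_subset (m := m)
    (fun W (_ : W ⊆ univ) => exists_triangle W) (by rw [card_univ]; omega)
  exact ⟨S, fun i => (hS i).1, fun i => (hS i).2, hdisjoint⟩
end

section
/- Let m ≥ 1 and let G be a completely edge-colored complete graph on n ≥ 9m + 8 vertices. If the number of distinct colors satisfies c(G) > mn - ((m+1) choose 2), then G contains m pairwise vertex-disjoint rainbow triangles. -/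
/-!
Induction on `m`. Call a color of an edge from `x` into `B` new if it does not occur inside `B`:
two edges at `x` with distinct new colors span a rainbow triangle. A coloring of `A` with at least
`|A|` colors has a rainbow triangle `T`. Consider the new colors from each vertex of `T` into
`A \ T`.

If some `x ∈ T` has at least `3(m - 1) + 2` of them, delete `x`. This destroys at most `|A| - 1`
colors, so there are `m - 1` disjoint rainbow triangles avoiding `x`; they block at most `3(m - 1)`
of the new colors at `x`, and two of the remaining ones give the last triangle. Otherwise deleting
`T` destroys at most `3(3(m - 1) + 1) + 3` colors, which is affordable as soon as `7m ≤ |A|`, and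
`T` itself is the last triangle.
-/

open Finset

section Coloring

variable {V α : Type*} [DecidableEq V] [DecidableEq α] {C : Sym2 V → α}
  {A B T W : Finset V} {k m : ℕ} {x : V}

/-- The edges of the complete graph on `A`. -/
def spannedEdges (A : Finset V) : Finset (Sym2 V) :=
  A.offDiag.image Sym2.mk.uncurry

/-- The colors of the edges inside `A`; `c(G)` is the number of colors spanned by all vertices. -/
def spannedColors (C : Sym2 V → α) (A : Finset V) : Finset α :=
  (spannedEdges A).image C

/-- The colors of the edges from `x` to `B` that do not occur inside `B`; intended for `x ∉ B`. -/
def newColors (C : Sym2 V → α) (x : V) (B : Finset V) : Finset α :=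
  (B.image fun b => C s(x, b)) \ spannedColors C B

/-- Rainbow triangles, as vertex sets: three vertices span at most three colors, so spanning
exactly three means that the edges have distinct colors. -/
structure IsRainbowTriangle (C : Sym2 V → α) (T : Finset V) : Prop where
  card_eq : #T = 3
  card_spannedColors : #(spannedColors C T) = 3

/-- A family of pairwise vertex-disjoint rainbow triangles inside `A` (a proper `mK₃` when the
family has `m` members). -/
structure IsRainbowTrianglePacking (C : Sym2 V → α) (A : Finset V) (P : Finset (Finset V)) :
    Prop where
  subset : ∀ T ∈ P, T ⊆ A
  isRainbowTriangle : ∀ T ∈ P, IsRainbowTriangle C T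
  pairwiseDisjoint : (P : Set (Finset V)).PairwiseDisjoint id

/-- The color condition `c(A) > m|A| - (m + 1 choose 2)` on the complete graph on `A`, with the
binomial coefficient moved to the other side to avoid truncated subtraction. -/
def IsColorRich (C : Sym2 V → α) (m : ℕ) (A : Finset V) : Prop :=
  m * #A < #(spannedColors C A) + (m + 1).choose 2

theorem mk_mem_spannedEdges {a b : V} : s(a, b) ∈ spannedEdges A ↔ a ∈ A ∧ b ∈ A ∧ a ≠ b := by
  simp only [spannedEdges, mem_image, mem_offDiag, Prod.exists, Function.uncurry_apply_pair,
    Sym2.eq_iff]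
  grind

theorem mem_spannedColors {c : α} :
    c ∈ spannedColors C A ↔ ∃ a ∈ A, ∃ b ∈ A, a ≠ b ∧ C s(a, b) = c := by
  simp only [spannedColors, mem_image, Sym2.exists, mk_mem_spannedEdges]
  grind

theorem card_spannedColors_le : #(spannedColors C A) ≤ (#A).choose 2 :=
  card_image_le.trans_eq (Sym2.card_image_offDiag A)

theorem card_newColors_le : #(newColors C x B) ≤ #B :=
  (card_le_card sdiff_subset).trans card_image_le

theorem spannedColors_union_subset :
    spannedColors C (B ∪ T) ⊆
      spannedColors C B ∪ T.biUnion (newColors C · B) ∪ spannedColors C T := by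
  intro c hc
  obtain ⟨a, ha, b, hb, hab, rfl⟩ := mem_spannedColors.1 hc
  have crossing {t : V} (ht : t ∈ T) {v : V} (hv : v ∈ B) :
      C s(t, v) ∈ spannedColors C B ∪ T.biUnion (newColors C · B) := by
    simp only [newColors, mem_union, mem_biUnion, mem_sdiff, mem_image]
    grind
  rw [mem_union]
  rcases mem_union.1 ha with haB | haT <;> rcases mem_union.1 hb with hbB | hbT
  · exact .inl (mem_union_left _ (mem_spannedColors.2 ⟨a, haB, b, hbB, hab, rfl⟩))
  · exact .inl (Sym2.eq_swap (a := a) ▸ crossing hbT haB)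
  · exact .inl (crossing haT hbB)
  · exact .inr (mem_spannedColors.2 ⟨a, haT, b, hbT, hab, rfl⟩)

theorem card_spannedColors_union_le :
    #(spannedColors C (B ∪ T)) ≤
      #(spannedColors C B) + ∑ t ∈ T, #(newColors C t B) + #(spannedColors C T) := by
  grw [spannedColors_union_subset, card_union_le, card_union_le, card_biUnion_le]

theorem card_spannedColors_insert_le :
    #(spannedColors C (insert x B)) ≤ #(spannedColors C B) + #(newColors C x B) := by
  have hx : #(spannedColors C {x}) = 0 := by simpa using card_spannedColors_le (C := C) (A := {x})
  simpa [hx] using card_spannedColors_union_le (C := C) (B := B) (T := {x})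

theorem isRainbowTriangle_of_ne {a b : V} (hxa : x ≠ a) (hxb : x ≠ b) (hab : a ≠ b)
    (hC_x : C s(x, a) ≠ C s(x, b)) (hC_a : C s(x, a) ≠ C s(a, b))
    (hC_b : C s(x, b) ≠ C s(a, b)) : IsRainbowTriangle C {x, a, b} := by
  have hcard : #{x, a, b} = 3 := card_eq_three.2 ⟨x, a, b, hxa, hxb, hab, rfl⟩
  refine ⟨hcard, le_antisymm ?_ (two_lt_card.2 ?_)⟩
  · simpa [hcard] using card_spannedColors_le (C := C) (A := {x, a, b})
  · refine ⟨C s(x, a), ?_, C s(x, b), ?_, C s(a, b), ?_, hC_x, hC_a, hC_b⟩ <;>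
      exact mem_spannedColors.2 ⟨_, by simp, _, by simp, by assumption, rfl⟩

theorem exists_isRainbowTriangle_disjoint_of_card_newColors (hxB : x ∉ B) (hxW : x ∉ W)
    (h : #W + 2 ≤ #(newColors C x B)) :
    ∃ T ⊆ insert x B, IsRainbowTriangle C T ∧ Disjoint T W := by
  have hW : #(W.image fun w => C s(x, w)) ≤ #W := card_image_le
  have hfree : 1 < #(newColors C x B \ W.image fun w => C s(x, w)) := by
    have := le_card_sdiff (W.image fun w => C s(x, w)) (newColors C x B)
    omega
  obtain ⟨p, hp, q, hq, hpq⟩ := one_lt_card.1 hfree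
  simp only [newColors, mem_sdiff, mem_image] at hp hq
  obtain ⟨⟨⟨a, ha, rfl⟩, ha_new⟩, haW⟩ := hp
  obtain ⟨⟨⟨b, hb, rfl⟩, hb_new⟩, hbW⟩ := hq
  have hab : a ≠ b := fun hab => hpq (hab ▸ rfl)
  have hC : C s(a, b) ∈ spannedColors C B := mem_spannedColors.2 ⟨a, ha, b, hb, hab, rfl⟩
  refine ⟨{x, a, b}, insert_subset_insert x (by simp [insert_subset_iff, ha, hb]),
    isRainbowTriangle_of_ne ?_ ?_ hab hpq ?_ ?_, ?_⟩
  · exact (ne_of_mem_of_not_mem ha hxB).symm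
  · exact (ne_of_mem_of_not_mem hb hxB).symm
  · exact (ne_of_mem_of_not_mem hC ha_new).symm
  · exact (ne_of_mem_of_not_mem hC hb_new).symm
  · simp only [disjoint_insert_left, disjoint_singleton_left]
    exact ⟨hxW, fun ha => haW ⟨a, ha, rfl⟩, fun hb => hbW ⟨b, hb, rfl⟩⟩

theorem exists_isRainbowTriangle_of_card_le (hA : A.Nonempty) (h : #A ≤ #(spannedColors C A)) :
    ∃ T ⊆ A, IsRainbowTriangle C T := by
  induction hA using Nonempty.cons_induction with
  | singleton a => simpa using h.trans card_spannedColors_le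
  | cons a s ha _ ih =>
    rw [cons_eq_insert, card_insert_of_notMem ha] at h
    rw [cons_eq_insert]
    by_cases hs : #s ≤ #(spannedColors C s)
    · obtain ⟨T, hTs, hT⟩ := ih hs
      exact ⟨T, hTs.trans (subset_insert a s), hT⟩
    · have h_new : #(∅ : Finset V) + 2 ≤ #(newColors C a s) := by
        have := card_spannedColors_insert_le (C := C) (x := a) (B := s)
        rw [card_empty]
        omega
      obtain ⟨T, hTs, hT, -⟩ :=
        exists_isRainbowTriangle_disjoint_of_card_newColors ha (notMem_empty a) h_new
      exact ⟨T, hTs, hT⟩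

theorem IsRainbowTriangle.injOn_spannedEdges (hT : IsRainbowTriangle C T) :
    Set.InjOn C (spannedEdges T) := by
  refine injOn_of_card_image_eq (hT.card_spannedColors.trans ?_)
  rw [spannedEdges, Sym2.card_image_offDiag, hT.card_eq, Nat.choose_two_right]

theorem IsRainbowTriangle.isRainbowClique {C : Sym2 V → ℕ} (hT : IsRainbowTriangle C T) :
    IsRainbowClique (⊤ : SimpleGraph V) C T :=
  ⟨fun _ _ _ _ huv => huv, fun _ hu _ hv _ hx _ hy huv hxy hC =>
    hT.injOn_spannedEdges (mk_mem_spannedEdges.2 ⟨hu, hv, huv⟩)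
      (mk_mem_spannedEdges.2 ⟨hx, hy, hxy⟩) hC⟩

namespace IsRainbowTrianglePacking

variable {P : Finset (Finset V)}

theorem mono (hP : IsRainbowTrianglePacking C B P) (hBA : B ⊆ A) :
    IsRainbowTrianglePacking C A P :=
  ⟨fun T hT => (hP.subset T hT).trans hBA, hP.isRainbowTriangle, hP.pairwiseDisjoint⟩

theorem biUnion_subset (hP : IsRainbowTrianglePacking C A P) : P.biUnion id ⊆ A :=
  Finset.biUnion_subset.2 hP.subset

theorem card_biUnion_le (hP : IsRainbowTrianglePacking C A P) : #(P.biUnion id) ≤ #P * 3 :=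
  card_biUnion_le_card_mul _ _ _ fun T hT => (hP.isRainbowTriangle T hT).card_eq.le

theorem insert (hP : IsRainbowTrianglePacking C A P) (hTA : T ⊆ A) (hT : IsRainbowTriangle C T)
    (hd : Disjoint T (P.biUnion id)) : IsRainbowTrianglePacking C A (insert T P) where
  subset := forall_mem_insert _ _ _ |>.2 ⟨hTA, hP.subset⟩
  isRainbowTriangle := forall_mem_insert _ _ _ |>.2 ⟨hT, hP.isRainbowTriangle⟩
  pairwiseDisjoint := by
    rw [coe_insert]
    exact hP.pairwiseDisjoint.insert fun S hS _ => (disjoint_biUnion_right _ _ _).1 hd S hS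

theorem exists_card_eq_add_one (hP : IsRainbowTrianglePacking C A P) (hTA : T ⊆ A)
    (hT : IsRainbowTriangle C T) (hd : Disjoint T (P.biUnion id)) :
    ∃ Q, IsRainbowTrianglePacking C A Q ∧ #Q = #P + 1 := by
  refine ⟨_, hP.insert hTA hT hd, card_insert_of_notMem fun hTP => ?_⟩
  have hT_empty : T = ∅ :=
    disjoint_self_iff_empty T |>.1 ((disjoint_biUnion_right _ _ _).1 hd T hTP)
  simpa [hT_empty] using hT.card_eq

theorem exists_fin_family {C : Sym2 V → ℕ} (hP : IsRainbowTrianglePacking C A P) (hm : #P = m) :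
    ∃ S : Fin m → Finset V, (∀ i, #(S i) = 3) ∧
      (∀ i, IsRainbowClique (⊤ : SimpleGraph V) C (S i)) ∧
      ∀ i j, i ≠ j → Disjoint (S i) (S j) := by
  let e := (P.equivFinOfCardEq hm).symm
  refine ⟨fun i => e i, fun i => (hP.isRainbowTriangle _ (e i).2).card_eq,
    fun i => (hP.isRainbowTriangle _ (e i).2).isRainbowClique, fun i j hij => ?_⟩
  exact hP.pairwiseDisjoint (e i).2 (e j).2 (Subtype.coe_injective.ne (e.injective.ne hij))

end IsRainbowTrianglePacking

namespace IsColorRich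

theorem add_one_iff :
    IsColorRich C (k + 1) A ↔
      k * #A + #A < #(spannedColors C A) + ((k + 1).choose 2 + (k + 1)) := by
  rw [IsColorRich, Nat.choose_succ_succ' (k + 1) 1, Nat.choose_one_right, Nat.succ_mul,
    Nat.add_comm (k + 1) (Nat.choose _ _)]

theorem card_le_card_spannedColors (h : IsColorRich C (k + 1) A) (hA : k + 2 ≤ #A) :
    #A ≤ #(spannedColors C A) := by
  rw [add_one_iff] at h
  have h_choose : (k + 1).choose 2 ≤ k * (k + 1) := by
    rw [Nat.choose_two_right, Nat.add_sub_cancel, mul_comm]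
    exact Nat.div_le_self _ _
  have h_mul : k * (k + 1) + k ≤ k * #A := Nat.mul_le_mul_left k hA
  omega

theorem erase (h : IsColorRich C (k + 1) A) (hx : x ∈ A) : IsColorRich C k (A.erase x) := by
  rw [add_one_iff] at h
  have h_card : #(A.erase x) + 1 = #A := card_erase_add_one hx
  have h_lost := card_spannedColors_insert_le (C := C) (x := x) (B := A.erase x)
  have h_new := card_newColors_le (C := C) (x := x) (B := A.erase x)
  rw [insert_erase hx] at h_lost
  rw [← h_card, Nat.mul_add] at h
  rw [IsColorRich]
  omega

theorem sdiff_of_card_newColors_le (h : IsColorRich C (k + 1) A) (hA : 7 * (k + 1) ≤ #A)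
    (hTA : T ⊆ A) (hT : #T = 3) (h_new : ∀ t ∈ T, #(newColors C t (A \ T)) ≤ 3 * k + 1) :
    IsColorRich C k (A \ T) := by
  rw [add_one_iff] at h
  have h_card : #(A \ T) + 3 = #A := hT ▸ card_sdiff_add_card_eq_card hTA
  have h_lost := card_spannedColors_union_le (C := C) (B := A \ T) (T := T)
  have h_sum : ∑ t ∈ T, #(newColors C t (A \ T)) ≤ 3 * (3 * k + 1) := by
    simpa [hT] using sum_le_card_nsmul T _ _ h_new
  have h_inside : #(spannedColors C T) ≤ 3 := by
    simpa [hT, Nat.choose_two_right] using card_spannedColors_le (C := C) (A := T)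
  rw [sdiff_union_of_subset hTA] at h_lost
  rw [← h_card, Nat.mul_add] at h
  rw [IsColorRich]
  omega

theorem exists_packing (hA : 7 * m ≤ #A) (h : IsColorRich C m A) :
    ∃ P, IsRainbowTrianglePacking C A P ∧ #P = m := by
  induction m generalizing A with
  | zero => exact ⟨∅, ⟨by simp, by simp, by simp⟩, card_empty⟩
  | succ k ih =>
    obtain ⟨T, hTA, hT⟩ := exists_isRainbowTriangle_of_card_le (card_pos.1 (by omega))
      (h.card_le_card_spannedColors (by omega))
    by_cases h_new : ∃ x ∈ T, 3 * k + 2 ≤ #(newColors C x (A \ T))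
    · obtain ⟨x, hxT, hx_new⟩ := h_new
      have hxA : x ∈ A := hTA hxT
      have h_card : #(A.erase x) + 1 = #A := card_erase_add_one hxA
      obtain ⟨P, hP, rfl⟩ := ih (by omega) (h.erase hxA)
      have hxP : x ∉ P.biUnion id := fun hx => notMem_erase x A (hP.biUnion_subset hx)
      have h_free : #(P.biUnion id) + 2 ≤ #(newColors C x (A \ T)) := by
        have := hP.card_biUnion_le
        omega
      obtain ⟨S, hSA, hS, hSP⟩ := exists_isRainbowTriangle_disjoint_of_card_newColors
        (notMem_sdiff_of_mem_right hxT) hxP h_free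
      exact (hP.mono (erase_subset x A)).exists_card_eq_add_one
        (hSA.trans (insert_subset hxA sdiff_subset)) hS hSP
    · have h_card : #(A \ T) + 3 = #A := hT.card_eq ▸ card_sdiff_add_card_eq_card hTA
      have h_rich : IsColorRich C k (A \ T) :=
        h.sdiff_of_card_newColors_le hA hTA hT.card_eq (by grind)
      obtain ⟨P, hP, rfl⟩ := ih (by omega) h_rich
      exact (hP.mono sdiff_subset).exists_card_eq_add_one hTA hT
        (disjoint_sdiff.mono_right hP.biUnion_subset)

end IsColorRich

theorem image_edgeSet_top [Fintype V] (C : Sym2 V → α) :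
    C '' (⊤ : SimpleGraph V).edgeSet = spannedColors C univ := by
  rw [spannedColors, coe_image]
  congr 1
  ext ⟨a, b⟩
  simp [mk_mem_spannedEdges]

end Coloring

theorem disjoint_rainbow_triangles_of_colors_in_complete_general {V : Type*} [Fintype V] {m : ℕ}
    (hm : 7 * m ≤ Fintype.card V) (C : Sym2 V → ℕ)
    (h : m * Fintype.card V < Nat.card (C '' (⊤ : SimpleGraph V).edgeSet) + (m + 1).choose 2) :
    ∃ S : Fin m → Finset V, (∀ i, (S i).card = 3) ∧
      (∀ i, IsRainbowClique (⊤ : SimpleGraph V) C (S i)) ∧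
      ∀ i j, i ≠ j → Disjoint (S i) (S j) := by
  classical
  rw [image_edgeSet_top, Nat.card_coe_set_eq, Set.ncard_coe_finset] at h
  obtain ⟨P, hP, hPm⟩ := IsColorRich.exists_packing (A := univ) hm h
  exact hP.exists_fin_family hPm

/-- If `G` is an edge-colored complete graph on `n ≥ 9m + 8` vertices with
`c(G) > mn - C(m+1, 2)` colors, then `G` contains `m` pairwise vertex-disjoint
rainbow triangles. -/
theorem disjoint_rainbow_triangles_of_colors_in_complete {V : Type*} [Fintype V] (n m : ℕ)
    (hm : 1 ≤ m) (hV : Fintype.card V = n) (hn : 9 * m + 8 ≤ n)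
    (C : Sym2 V → ℕ)
    (h : Nat.card (C '' (⊤ : SimpleGraph V).edgeSet) > m * n - (m + 1).choose 2) :
    ∃ S : Fin m → Finset V, (∀ i, (S i).card = 3) ∧
      (∀ i, IsRainbowClique (⊤ : SimpleGraph V) C (S i)) ∧
      ∀ i j, i ≠ j → Disjoint (S i) (S j) := by
  subst hV
  exact disjoint_rainbow_triangles_of_colors_in_complete_general (by omega) C (by omega)
end

section
/- Let G be an edge-colored graph, let v_1, ..., v_N be N ≥ 1 distinct vertices of G, and let k ≥ 0. If φ_G(v_1, ..., v_N) ≥ k + N - 1, then there exist k edges e_1, ..., e_k of G such that: (1) for every i ≤ k, the edge e_i is incident to v_1 and its other endpoint lies outside {v_1, ..., v_N}; (2) the colors C(e_1), ..., C(e_k) are pairwise distinct; and (3) each color C(e_i) is saturated by some set {v_1, ..., v_M} with M ≤ N. -/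
/-- A color `R` appears on some edge of the edge-colored graph `(G, C)`. -/
def IsColor {V : Type*} (G : SimpleGraph V) (C : Sym2 V → ℕ) (R : ℕ) : Prop :=
  ∃ e ∈ G.edgeSet, C e = R

/-- A color `R` is saturated by a vertex set `A` if every edge of `G` colored `R`
has an endpoint in `A`. -/
def Saturated {V : Type*} (G : SimpleGraph V) (C : Sym2 V → ℕ) (A : Set V) (R : ℕ) : Prop :=
  ∀ e ∈ G.edgeSet, C e = R → ∃ v ∈ A, v ∈ e

/-- A color `R` is ideally saturated by `A` if it is saturated by `A` but not by any
proper subset of `A`. -/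
def IdeallySaturated {V : Type*} (G : SimpleGraph V) (C : Sym2 V → ℕ) (A : Set V) (R : ℕ) :
    Prop :=
  Saturated G C A R ∧ ∀ B : Set V, B ⊂ A → ¬ Saturated G C B R

/-- `φ_G(A)`: the number of colors of `G` ideally saturated by `A`. -/
noncomputable def phiSat {V : Type*} (G : SimpleGraph V) (C : Sym2 V → ℕ) (A : Set V) : ℕ :=
  Nat.card {R : ℕ | IsColor G C R ∧ IdeallySaturated G C A R}

/-!
A color ideally saturated by a set `A` containing `u` has an edge `uw`: it has an edge missing
`A \ {u}`, and that edge meets `A`. A color cannot be ideally saturated by two members of a strict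
chain, so along a chain of sets containing `u` the counts `φ` add up to at most the number of
distinct colors of edges at `u` that arise in this way. Edges from `u` into a set `S` carry at most
`|S \ {u}|` of these colors, so each remaining color has an edge from `u` leaving `S`.
-/

section

variable {α β ι : Type*}

theorem exists_fin_injective_of_le_encard {s : Set α} {k : ℕ} (h : (k : ℕ∞) ≤ s.encard) :
    ∃ f : Fin k → α, Function.Injective f ∧ ∀ i, f i ∈ s := by
  obtain ⟨t, hts, htk⟩ := Set.exists_subset_encard_eq h
  have : Finite t := Set.finite_of_encard_eq_coe htk
  have htk' : Nat.card t = k := by rw [Nat.card_coe_set_eq, Set.ncard, htk, ENat.toNat_natCast]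
  let e := Finite.equivFinOfCardEq htk'
  exact ⟨fun i => e.symm i, Subtype.val_injective.comp e.symm.injective,
    fun i => hts (e.symm i).2⟩

theorem exists_fin_injective_comp_of_le_encard_image {f : α → β} {s t : Set α} (ht : t.Finite)
    {k : ℕ} (h : ((k + t.ncard : ℕ) : ℕ∞) ≤ (f '' s).encard) :
    ∃ w : Fin k → α, Function.Injective (f ∘ w) ∧ ∀ i, w i ∈ s \ t := by
  have hcard : (k : ℕ∞) + t.encard ≤ (f '' (s \ t)).encard + t.encard := calc
    (k : ℕ∞) + t.encard = ((k + t.ncard : ℕ) : ℕ∞) := by rw [Nat.cast_add, ht.cast_ncard_eq]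
    _ ≤ (f '' s).encard := h
    _ ≤ (f '' (s \ t) ∪ f '' t).encard := Set.encard_le_encard <| by
      rw [← Set.image_union, Set.sdiff_union_self]
      exact Set.image_mono Set.subset_union_left
    _ ≤ (f '' (s \ t)).encard + (f '' t).encard := Set.encard_union_le _ _
    _ ≤ (f '' (s \ t)).encard + t.encard := by gcongr; exact Set.encard_image_le f t
  obtain ⟨b, hb, hbmem⟩ := exists_fin_injective_of_le_encard
    ((ENat.add_le_add_iff_right ht.encard_lt_top.ne).mp hcard)
  choose w hw hfw using hbmem
  exact ⟨w, by rwa [show f ∘ w = b from funext hfw], hw⟩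

theorem sum_ncard_le_encard_iUnion [Fintype ι] {s : ι → Set α}
    (hs : Pairwise (Function.onFun Disjoint s)) :
    ((∑ i, (s i).ncard : ℕ) : ℕ∞) ≤ (⋃ i, s i).encard := by
  rw [Set.encard_iUnion_of_finite hs, finsum_eq_sum_of_fintype, Nat.cast_sum]
  exact Finset.sum_le_sum fun i _ => Set.ncard_le_encard (s i)

theorem ncard_range_sdiff_singleton {f : ι → α} (hf : Function.Injective f) (i : ι) :
    (Set.range f \ {f i}).ncard = Nat.card ι - 1 := by
  rw [Set.ncard_sdiff_singleton_of_mem (Set.mem_range_self i), Set.ncard_range_of_injective hf]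

theorem strictMono_setOf_exists_le_eq [Preorder ι] {f : ι → α} (hf : Function.Injective f) :
    StrictMono fun i => {x | ∃ j, j ≤ i ∧ x = f j} := by
  intro i j hij
  refine ⟨fun x ⟨l, hl, hx⟩ => ⟨l, hl.trans hij.le, hx⟩, fun hsub => ?_⟩
  obtain ⟨l, hl, hjl⟩ := hsub ⟨j, le_rfl, rfl⟩
  exact hij.not_ge (hf hjl ▸ hl)

end

section

variable {V : Type*} {G : SimpleGraph V} {C : Sym2 V → ℕ} {A B : Set V} {R : ℕ} {u : V}

variable (G C A) in
/-- The colors of `G` ideally saturated by `A`, i.e. the set counted by `φ_G(A)`. Requiring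
`IsColor` excludes the colors on no edge, which the empty set would ideally saturate. -/
def idealColors : Set ℕ :=
  {R | IsColor G C R ∧ IdeallySaturated G C A R}

theorem disjoint_idealColors_of_ssubset (hAB : A ⊂ B) :
    Disjoint (idealColors G C A) (idealColors G C B) :=
  Set.disjoint_left.mpr fun _ hA hB => hB.2.2 A hAB hA.2.1

theorem sum_phiSat_le_encard_iUnion_idealColors {ι : Type*} [LinearOrder ι] [Fintype ι]
    {A : ι → Set V} (hA : StrictMono A) :
    ((∑ i, phiSat G C (A i) : ℕ) : ℕ∞) ≤ (⋃ i, idealColors G C (A i)).encard :=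
  sum_ncard_le_encard_iUnion <| (pairwise_disjoint_on _).mpr fun _ _ hij =>
    disjoint_idealColors_of_ssubset (hA hij)

theorem IdeallySaturated.exists_adj (hR : IdeallySaturated G C A R) (hu : u ∈ A) :
    ∃ w, G.Adj u w ∧ C s(u, w) = R := by
  have hnot : ¬ Saturated G C (A \ {u}) R := hR.2 _ (Set.sdiff_singleton_ssubset.mpr hu)
  unfold Saturated at hnot
  push Not at hnot
  obtain ⟨e, he, heR, hmiss⟩ := hnot
  obtain ⟨x, hxA, hxe⟩ := hR.1 e he heR
  obtain rfl : x = u := by_contra fun hne => hmiss x ⟨hxA, hne⟩ hxe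
  obtain ⟨w, rfl⟩ := Sym2.mem_iff_exists.mp hxe
  exact ⟨w, he, heR⟩

theorem iUnion_idealColors_subset_image {ι : Type*} {A : ι → Set V} (hu : ∀ i, u ∈ A i) :
    ⋃ i, idealColors G C (A i) ⊆
      (fun w => C s(u, w)) '' {w | G.Adj u w ∧ ∃ i, IdeallySaturated G C (A i) (C s(u, w))} := by
  refine Set.iUnion_subset fun i R hR => ?_
  obtain ⟨w, hadj, rfl⟩ := hR.2.exists_adj (hu i)
  exact ⟨w, ⟨hadj, i, hR.2⟩, rfl⟩

end

theorem exists_edges_of_phiSat_sum_general {V ι : Type*} [LinearOrder ι] [Fintype ι]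
    {G : SimpleGraph V} {C : Sym2 V → ℕ} {A : ι → Set V} (hA : StrictMono A) {u : V}
    (hu : ∀ i, u ∈ A i) {S : Set V} (hS : S.Finite) {k : ℕ}
    (h : k + (S \ {u}).ncard ≤ ∑ i, phiSat G C (A i)) :
    ∃ w : Fin k → V,
      (∀ i, G.Adj u (w i)) ∧
      (∀ i, w i ∉ S) ∧
      (Function.Injective fun i => C s(u, w i)) ∧
      (∀ i, ∃ M, IdeallySaturated G C (A M) (C s(u, w i))) := by
  have hcolors : ((k + (S \ {u}).ncard : ℕ) : ℕ∞) ≤ ((fun w => C s(u, w)) ''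
      {w | G.Adj u w ∧ ∃ i, IdeallySaturated G C (A i) (C s(u, w))}).encard := calc
    ((k + (S \ {u}).ncard : ℕ) : ℕ∞) ≤ ((∑ i, phiSat G C (A i) : ℕ) : ℕ∞) := Nat.cast_le.mpr h
    _ ≤ (⋃ i, idealColors G C (A i)).encard := sum_phiSat_le_encard_iUnion_idealColors hA
    _ ≤ _ := Set.encard_le_encard (iUnion_idealColors_subset_image hu)
  obtain ⟨w, hinj, hw⟩ := exists_fin_injective_comp_of_le_encard_image hS.sdiff hcolors
  have hadj : ∀ i, G.Adj u (w i) := fun i => (hw i).1.1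
  exact ⟨w, hadj, fun i hwS => (hw i).2 ⟨hwS, (hadj i).ne'⟩, hinj, fun i => (hw i).1.2⟩

/-- If `φ_G(v_1, ..., v_N) := Σ_{i=1}^N φ_G({v_1, ..., v_i}) ≥ k + N - 1` for distinct
vertices `v_1, ..., v_N`, then there are `k` edges at `v_1` with pairwise distinct colors,
whose other endpoints avoid `{v_1, ..., v_N}`, each of whose colors is saturated by some
initial segment `{v_1, ..., v_M}` with `M ≤ N`. -/
theorem exists_edges_of_phiSat_sum {V : Type*} [Fintype V]
    (G : SimpleGraph V) (C : Sym2 V → ℕ) (N k : ℕ) (hN : 0 < N)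
    (v : Fin N → V) (hv : Function.Injective v)
    (h : ∑ i : Fin N, phiSat G C {x | ∃ j, j ≤ i ∧ x = v j} ≥ k + N - 1) :
    ∃ w : Fin k → V,
      (∀ i, G.Adj (v ⟨0, hN⟩) (w i)) ∧
      (∀ i, w i ∉ Set.range v) ∧
      (∀ i j, i ≠ j → C s(v ⟨0, hN⟩, w i) ≠ C s(v ⟨0, hN⟩, w j)) ∧
      (∀ i, ∃ M : Fin N, Saturated G C {x | ∃ j, j ≤ M ∧ x = v j} (C s(v ⟨0, hN⟩, w i))) := by
  obtain ⟨w, hadj, hout, hinj, hsat⟩ := exists_edges_of_phiSat_sum_general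
    (strictMono_setOf_exists_le_eq hv) (u := v ⟨0, hN⟩) (fun i => ⟨_, Nat.zero_le i, rfl⟩)
    (Set.finite_range v)
    (by rw [ncard_range_sdiff_singleton hv, Nat.card_fin, ← Nat.add_sub_assoc hN]; exact h)
  exact ⟨w, hadj, hout, fun i j hij => hinj.ne hij, fun i => (hsat i).imp fun _ hM => hM.1⟩
end

section
/- For every n ≥ 2, the edge coloring of the complete graph on vertices v_1, ..., v_n defined by C(v_i v_j) = i for 1 ≤ i < j ≤ n uses exactly n - 1 colors and contains no rainbow triangle; consequently for this edge-colored graph T_n one has e(T_n) + c(T_n) = (n choose 2) + n - 1. -/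
/-!
The color of an edge is determined by its smaller end, and the vertices that are the smaller end of
some edge are exactly those that are not maximal: all but one. In a triangle, the smallest vertex is
the smaller end of two of the three edges, so these two have the same color.
-/

section LinearOrder

variable {V : Type*} [LinearOrder V]

theorem min_eq_min_or_min_eq_min_or_min_eq_min (a b c : V) :
    min a b = min a c ∨ min a b = min b c ∨ min a c = min b c := by
  grind

theorem ncard_setOf_not_isMax [Finite V] [Nonempty V] :
    {v : V | ¬ IsMax v}.ncard = Nat.card V - 1 := by
  obtain ⟨m, hm⟩ := Finite.exists_max (id : V → V)
  have hmax (v : V) : IsMax v ↔ v = m :=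
    ⟨fun hv => hv.eq_of_le (hm v), fun hv => hv ▸ fun w _ => hm w⟩
  have hcompl : {v : V | ¬ IsMax v} = {m}ᶜ := by
    ext v
    simp [hmax]
  rw [hcompl, Set.ncard_compl, Set.ncard_singleton]

end LinearOrder

theorem natCard_edgeSet_top (V : Type*) [Finite V] :
    Nat.card (⊤ : SimpleGraph V).edgeSet = (Nat.card V).choose 2 := by
  classical
  have := Fintype.ofFinite V
  rw [Nat.card_eq_fintype_card, ← SimpleGraph.edgeFinset_card,
    SimpleGraph.card_edgeFinset_top_eq_card_choose_two, Nat.card_eq_fintype_card]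

/-- `C` colors each edge of the complete graph on the ordered vertex set `V` by the label `f v` of
its smaller end `v`; the values of `C` on loops are unconstrained. The coloring of `T_n` is the case
`V = Fin n`, `f = Fin.val`, with vertices and colors numbered from `0`. -/
def IsMinColoring {V α : Type*} [LinearOrder V] (f : V → α) (C : Sym2 V → α) : Prop :=
  ∀ ⦃i j : V⦄, i ≠ j → C s(i, j) = f (min i j)

namespace IsMinColoring

variable {V α : Type*} [LinearOrder V] {f : V → α} {C : Sym2 V → α}

theorem image_edgeSet_top (hC : IsMinColoring f C) :
    C '' (⊤ : SimpleGraph V).edgeSet = f '' {v | ¬ IsMax v} := by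
  ext k
  constructor
  · rintro ⟨⟨i, j⟩, hij : i ≠ j, rfl⟩
    have hlt : min i j < max i j := min_lt_max.2 hij
    exact ⟨min i j, hlt.not_isMax, (hC hij).symm⟩
  · rintro ⟨v, hv, rfl⟩
    obtain ⟨w, hvw⟩ := not_isMax_iff.1 hv
    refine ⟨s(v, w), hvw.ne, ?_⟩
    rw [hC hvw.ne, min_eq_left hvw.le]

theorem natCard_image_edgeSet_top [Finite V] [Nonempty V] (hC : IsMinColoring f C)
    (hf : f.Injective) : Nat.card (C '' (⊤ : SimpleGraph V).edgeSet) = Nat.card V - 1 := by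
  rw [hC.image_edgeSet_top, Nat.card_image_of_injective hf, Nat.card_coe_set_eq,
    ncard_setOf_not_isMax]

theorem not_exists_rainbow_triangle (hC : IsMinColoring f C) :
    ¬ ∃ a b c : V, a ≠ b ∧ a ≠ c ∧ b ≠ c ∧
      C s(a, b) ≠ C s(a, c) ∧ C s(a, b) ≠ C s(b, c) ∧ C s(a, c) ≠ C s(b, c) := by
  rintro ⟨a, b, c, hab, hac, hbc, hab_ac, hab_bc, hac_bc⟩
  rw [hC hab, hC hac] at hab_ac
  rw [hC hab, hC hbc] at hab_bc
  rw [hC hac, hC hbc] at hac_bc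
  rcases min_eq_min_or_min_eq_min_or_min_eq_min a b c with h | h | h
  · exact hab_ac (congrArg f h)
  · exact hab_bc (congrArg f h)
  · exact hac_bc (congrArg f h)

end IsMinColoring

theorem Tn_colors_and_no_rainbow_triangle_general {V α : Type*} [LinearOrder V] [Finite V]
    [Nonempty V] {f : V → α} (hf : f.Injective) {C : Sym2 V → α} (hC : IsMinColoring f C) :
    Nat.card (C '' (⊤ : SimpleGraph V).edgeSet) = Nat.card V - 1 ∧
    (¬ ∃ a b c : V, a ≠ b ∧ a ≠ c ∧ b ≠ c ∧
      C s(a, b) ≠ C s(a, c) ∧ C s(a, b) ≠ C s(b, c) ∧ C s(a, c) ≠ C s(b, c)) ∧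
    Nat.card (⊤ : SimpleGraph V).edgeSet + Nat.card (C '' (⊤ : SimpleGraph V).edgeSet) =
      (Nat.card V).choose 2 + (Nat.card V - 1) :=
  ⟨hC.natCard_image_edgeSet_top hf, hC.not_exists_rainbow_triangle, by
    rw [natCard_edgeSet_top, hC.natCard_image_edgeSet_top hf]⟩

/-- The edge-colored complete graph `T_n` (edge `v_i v_j` gets color `min i j`) uses exactly
`n - 1` colors, has no rainbow triangle, and satisfies `e(T_n) + c(T_n) = C(n,2) + n - 1`. -/
theorem Tn_colors_and_no_rainbow_triangle (n : ℕ) (hn : 2 ≤ n)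
    (C : Sym2 (Fin n) → ℕ) (hC : ∀ i j : Fin n, i ≠ j → C s(i, j) = min i.val j.val) :
    Nat.card (C '' (⊤ : SimpleGraph (Fin n)).edgeSet) = n - 1 ∧
    (¬ ∃ a b c : Fin n, a ≠ b ∧ a ≠ c ∧ b ≠ c ∧
      C s(a, b) ≠ C s(a, c) ∧ C s(a, b) ≠ C s(b, c) ∧ C s(a, c) ≠ C s(b, c)) ∧
    Nat.card (⊤ : SimpleGraph (Fin n)).edgeSet
      + Nat.card (C '' (⊤ : SimpleGraph (Fin n)).edgeSet) = n.choose 2 + (n - 1) := by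
  have : Nonempty (Fin n) := ⟨⟨0, by omega⟩⟩
  have hmin : IsMinColoring Fin.val C := fun i j hij =>
    (hC i j hij).trans (Fin.val_strictMono.monotone.map_min).symm
  simpa only [Nat.card_fin] using
    Tn_colors_and_no_rainbow_triangle_general Fin.val_injective hmin
end

section
/- For all m ≥ 1 and n ≥ m + 1, there exists an edge coloring of the complete graph K_n using exactly mn - ((m+1) choose 2) distinct colors that contains no m pairwise vertex-disjoint rainbow triangles. (In particular, the bound c(G) > mn - ((m+1) choose 2) in the accompanying theorem on complete graphs is best possible.) -/
/-!
Fix a set of `m - 1` hub vertices. Edges meeting a hub get private colors, and every other edge is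
colored by its smaller endpoint. Among three non-hub vertices the two edges at the smallest one
agree in color, so each rainbow triangle contains a hub, and there are at most `m - 1` pairwise
disjoint ones. The colors are the `n.choose 2 - (n - m + 1).choose 2` edges meeting a hub, together
with the `n - m` non-hub vertices other than the largest.
-/

open Finset

theorem card_le_card_of_pairwise_disjoint_of_not_disjoint {ι V : Type*} [Fintype ι]
    {S : ι → Finset V} {K : Finset V} (hS : Pairwise fun i j => Disjoint (S i) (S j))
    (hK : ∀ i, ¬ Disjoint (S i) K) : Fintype.card ι ≤ #K := by
  simp only [not_disjoint_iff] at hK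
  choose v hvS hvK using hK
  have v_injective : Function.Injective v := fun i j hij => by
    by_contra hne
    exact disjoint_left.mp (hS hne) (hvS i) (hij ▸ hvS j)
  exact card_le_card_of_injOn v (fun i _ => hvK i) v_injective.injOn

theorem card_filter_exists_gt {V : Type*} [LinearOrder V] (s : Finset V) :
    #{a ∈ s | ∃ b ∈ s, a < b} = #s - 1 := by
  obtain rfl | hs := s.eq_empty_or_nonempty
  · simp
  have filter_eq : {a ∈ s | ∃ b ∈ s, a < b} = s.erase (s.max' hs) := by
    ext a
    rw [mem_filter, mem_erase, and_comm]
    refine and_congr_left fun ha => ?_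
    rw [← (s.le_max' a ha).lt_iff_ne]
    exact ⟨fun ⟨b, hb, hab⟩ => hab.trans_le (s.le_max' b hb), fun h => ⟨_, s.max'_mem hs, h⟩⟩
  rw [filter_eq, card_erase_of_mem (s.max'_mem hs)]

theorem card_edgeFinset_top_filter_exists_mem_add {V : Type*} [Fintype V] [DecidableEq V]
    (K : Finset V) :
    #{e ∈ (⊤ : SimpleGraph V).edgeFinset | ∃ v ∈ K, v ∈ e} + (#Kᶜ).choose 2 =
      (Fintype.card V).choose 2 := by
  have avoiding_eq : {e ∈ (⊤ : SimpleGraph V).edgeFinset | ¬ ∃ v ∈ K, v ∈ e} =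
      Kᶜ.offDiag.image Sym2.mk.uncurry := by
    ext e
    induction e with | _ a b
    simp only [mem_filter, SimpleGraph.mem_edgeFinset, SimpleGraph.mem_edgeSet,
      SimpleGraph.top_adj, Sym2.mem_iff, mem_image, mem_offDiag, mem_compl, Prod.exists,
      Function.uncurry_apply_pair, Sym2.eq_iff]
    grind
  rw [← SimpleGraph.card_edgeFinset_top_eq_card_choose_two, ← Sym2.card_image_offDiag,
    ← avoiding_eq, card_filter_add_card_filter_not]

theorem choose_two_add_choose_two_add (m d : ℕ) :
    (m + d).choose 2 + (m + 1).choose 2 + d = m * (m + d) + (d + 1).choose 2 := by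
  qify
  simp only [Nat.cast_choose_two]
  push_cast
  ring

theorem IsRainbowClique.eq_of_color_eq {V : Type*} {G : SimpleGraph V} {C : Sym2 V → ℕ}
    {S : Finset V} (h : IsRainbowClique G C S) {a b c : V} (ha : a ∈ S) (hb : b ∈ S) (hc : c ∈ S)
    (hab : a ≠ b) (hac : a ≠ c) (hC : C s(a, b) = C s(a, c)) : b = c :=
  Sym2.congr_right.mp (h.2 a ha b hb a ha c hc hab hac hC)

section HubColoring

variable {V : Type*} [LinearOrder V]

/-- The coloring of the extremal construction: an edge meeting the set `K` of hubs is its own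
color, and any other edge is colored by its smaller endpoint, so that the complement of `K` spans
the copy of `T_{n-m+1}` when `#K = m - 1`. The sum type keeps the two kinds of colors apart. -/
def hubColoring (K : Finset V) (e : Sym2 V) : Sym2 V ⊕ V :=
  if ∃ v ∈ K, v ∈ e then .inl e else .inr e.inf

theorem hubColoring_eq_inl_iff {K : Finset V} {e e' : Sym2 V} :
    hubColoring K e = .inl e' ↔ e = e' ∧ ∃ v ∈ K, v ∈ e := by
  unfold hubColoring
  split_ifs with h <;> simp [h]

theorem hubColoring_eq_inr_iff {K : Finset V} {e : Sym2 V} {a : V} :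
    hubColoring K e = .inr a ↔ e.inf = a ∧ ∀ v ∈ e, v ∉ K := by
  unfold hubColoring
  split_ifs with h <;> grind

theorem hubColoring_of_lt {K : Finset V} {a b : V} (ha : a ∉ K) (hb : b ∉ K) (hab : a < b) :
    hubColoring K s(a, b) = .inr a := by
  simp [hubColoring_eq_inr_iff, hab.le, ha, hb]

theorem IsRainbowClique.not_disjoint_hubs {G : SimpleGraph V} {K S : Finset V}
    {f : Sym2 V ⊕ V → ℕ} (h : IsRainbowClique G (f ∘ hubColoring K) S) (hS : 3 ≤ #S) :
    ¬ Disjoint S K := by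
  intro hSK
  let x : Fin 3 ↪o V := S.orderEmbOfCardLe hS
  have mem (i : Fin 3) : x i ∈ S := S.orderEmbOfCardLe_mem hS i
  have notMem (i : Fin 3) : x i ∉ K := disjoint_left.mp hSK (mem i)
  have color_eq {i : Fin 3} (hi : 0 < i) : hubColoring K s(x 0, x i) = .inr (x 0) :=
    hubColoring_of_lt (notMem 0) (notMem i) (x.strictMono hi)
  have x_eq : x 1 = x 2 := by
    refine h.eq_of_color_eq (mem 0) (mem 1) (mem 2) (x.injective.ne (by decide))
      (x.injective.ne (by decide)) (congrArg f ?_)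
    rw [color_eq (by decide), color_eq (by decide)]
  exact absurd (x.injective x_eq) (by decide)

variable [Fintype V]

theorem image_hubColoring_edgeSet_top (K : Finset V) :
    hubColoring K '' (⊤ : SimpleGraph V).edgeSet =
      ({e ∈ (⊤ : SimpleGraph V).edgeFinset | ∃ v ∈ K, v ∈ e}.disjSum
        {a ∈ Kᶜ | ∃ b ∈ Kᶜ, a < b} : Finset (Sym2 V ⊕ V)) := by
  ext (e | a)
  · simp [hubColoring_eq_inl_iff]
  · simp only [Set.mem_image, mem_coe, inr_mem_disjSum, mem_filter, mem_compl]
    constructor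
    · rintro ⟨⟨b, c⟩, hbc, hcolor⟩
      obtain ⟨rfl, havoid⟩ := hubColoring_eq_inr_iff.mp hcolor
      have hb : b ∉ K := havoid b (Sym2.mem_mk_left b c)
      have hc : c ∉ K := havoid c (Sym2.mem_mk_right b c)
      obtain hlt | hgt := lt_or_gt_of_ne (show b ≠ c from hbc)
      · rw [Sym2.inf_mk, inf_eq_left.mpr hlt.le]
        exact ⟨hb, c, hc, hlt⟩
      · rw [Sym2.inf_mk, inf_eq_right.mpr hgt.le]
        exact ⟨hc, b, hb, hgt⟩
    · rintro ⟨ha, b, hb, hab⟩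
      exact ⟨s(a, b), by simpa using hab.ne, hubColoring_of_lt ha hb hab⟩

theorem ncard_image_hubColoring_add_choose_two (K : Finset V) :
    (hubColoring K '' (⊤ : SimpleGraph V).edgeSet).ncard + (#Kᶜ).choose 2 =
      (Fintype.card V).choose 2 + (#Kᶜ - 1) := by
  rw [image_hubColoring_edgeSet_top, Set.ncard_coe_finset, card_disjSum, card_filter_exists_gt,
    ← card_edgeFinset_top_filter_exists_mem_add K, add_right_comm]

theorem ncard_image_hubColoring {K : Finset V} (hK : #K < Fintype.card V) :
    (hubColoring K '' (⊤ : SimpleGraph V).edgeSet).ncard =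
      (#K + 1) * Fintype.card V - (#K + 2).choose 2 := by
  obtain ⟨d, hd⟩ := Nat.exists_eq_add_of_lt hK
  have card_compl_hubs : #Kᶜ = d + 1 := by rw [card_compl]; omega
  have count := ncard_image_hubColoring_add_choose_two K
  have binomial : (#K + 1 + d).choose 2 + (#K + 2).choose 2 + d =
      (#K + 1) * (#K + 1 + d) + (d + 1).choose 2 := choose_two_add_choose_two_add (#K + 1) d
  rw [card_compl_hubs] at count
  rw [hd, add_right_comm] at count ⊢
  omega

end HubColoring

/-- For all `m ≥ 1` and `n ≥ m + 1` there is an edge coloring of `K_n` with exactly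
`mn - C(m+1, 2)` colors and no `m` pairwise vertex-disjoint rainbow triangles. -/
theorem exists_coloring_no_disjoint_rainbow_triangles (m n : ℕ) (hm : 1 ≤ m)
    (hn : m + 1 ≤ n) :
    ∃ C : Sym2 (Fin n) → ℕ,
      Nat.card (C '' (⊤ : SimpleGraph (Fin n)).edgeSet) = m * n - (m + 1).choose 2 ∧
      ¬ ∃ S : Fin m → Finset (Fin n), (∀ i, (S i).card = 3) ∧
          (∀ i, IsRainbowClique (⊤ : SimpleGraph (Fin n)) C (S i)) ∧
          ∀ i j, i ≠ j → Disjoint (S i) (S j) := by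
  obtain ⟨k, rfl⟩ := Nat.exists_eq_add_of_le' hm
  obtain ⟨K, -, rfl⟩ : ∃ K ⊆ (univ : Finset (Fin n)), #K = k :=
    exists_subset_card_eq (by rw [card_fin]; omega)
  obtain ⟨f, f_injective⟩ := exists_injective_nat (Sym2 (Fin n) ⊕ Fin n)
  refine ⟨f ∘ hubColoring K, ?_, ?_⟩
  · have hK : #K < Fintype.card (Fin n) := by rw [Fintype.card_fin]; omega
    rw [Set.image_comp, Nat.card_image_of_injective f_injective, Nat.card_coe_set_eq,
      ncard_image_hubColoring hK, Fintype.card_fin]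
  · rintro ⟨S, hcard, hrainbow, hdisjoint⟩
    have card_le_hubs : Fintype.card (Fin (#K + 1)) ≤ #K :=
      card_le_card_of_pairwise_disjoint_of_not_disjoint hdisjoint
        fun i => (hrainbow i).not_disjoint_hubs (hcard i).ge
    rw [Fintype.card_fin] at card_le_hubs
    omega
end

section
/- For all m ≥ 1 and n ≥ 3m, there exists an edge coloring of the complete graph K_n using exactly n - 3m + ((3m-1) choose 2) + 1 distinct colors that contains no m pairwise vertex-disjoint rainbow triangles. -/
/-!
Fix a set `K` of `3m - 1` vertices. Color the edges inside `K` injectively, an edge outside `K` by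
its smaller endpoint, and all edges leaving `K` by one further color. A triangle with a vertex
outside `K` is not rainbow: if it meets `K`, it has two edges leaving `K`, and otherwise the two
edges at its smallest vertex have the same color. So rainbow triangles lie inside `K`, which has no
room for `m` disjoint ones. The largest vertex outside `K` is never the smaller endpoint of an edge
outside `K`, so the `n - 3m + 1` vertices outside `K` contribute `n - 3m` colors.
-/

theorem IsRainbowClique.color_ne_of_common_vertex {V : Type*} {G : SimpleGraph V} {C : Sym2 V → ℕ}
    {S : Finset V} (hS : IsRainbowClique G C S) {u v w : V} (hu : u ∈ S) (hv : v ∈ S) (hw : w ∈ S)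
    (huv : u ≠ v) (huw : u ≠ w) (hvw : v ≠ w) : C s(u, v) ≠ C s(u, w) := fun hC ↦
  hvw (Sym2.congr_right.mp (hS.2 u hu v hv u hu w hw huv huw hC))

theorem card_mul_le_card_of_disjoint_of_subset {ι V : Type*} [Fintype ι] {S : ι → Finset V}
    {K : Finset V} {r : ℕ} (hcard : ∀ i, r ≤ (S i).card)
    (hdisj : ∀ i j, i ≠ j → Disjoint (S i) (S j)) (hsub : ∀ i, S i ⊆ K) :
    Fintype.card ι * r ≤ K.card := by
  classical
  calc
    Fintype.card ι * r ≤ ∑ i, (S i).card :=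
      Finset.card_nsmul_le_sum Finset.univ _ r fun i _ ↦ hcard i
    _ = (Finset.univ.biUnion S).card :=
      (Finset.card_biUnion fun i _ j _ hij ↦ hdisj i j hij).symm
    _ ≤ K.card := Finset.card_le_card (Finset.biUnion_subset.mpr fun i _ ↦ hsub i)

theorem min_mem_erase_max' {V : Type*} [LinearOrder V] {s : Finset V} (hs : s.Nonempty) {u v : V}
    (hu : u ∈ s) (hv : v ∈ s) (huv : u ≠ v) : min u v ∈ s.erase (s.max' hs) := by
  have hlt : min u v < s.max' hs :=
    (min_lt_max.mpr huv).trans_le (max_le (s.le_max' u hu) (s.le_max' v hv))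
  exact Finset.mem_erase.mpr ⟨hlt.ne, min_rec' (· ∈ s) hu hv⟩

section JoinColor

variable {V : Type*} [Fintype V] [LinearOrder V] {K : Finset V} {u v w : V}

/-- The coloring of the join of a rainbow complete graph on `K` with the complete graph on `Kᶜ` in
which an edge has its smaller endpoint as color. The summands `Sym2 V` and `V` hold the colors of
the two parts, and `none` is the color of the edges between them. -/
def joinColor (K : Finset V) (e : Sym2 V) : Option (Sym2 V ⊕ V) :=
  if e ∈ K.sym2 then some (.inl e) else if e ∈ Kᶜ.sym2 then some (.inr e.inf) else none

theorem joinColor_of_mem_of_mem (hu : u ∈ K) (hv : v ∈ K) :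
    joinColor K s(u, v) = some (.inl s(u, v)) := by
  simp [joinColor, hu, hv]

theorem joinColor_of_notMem_of_notMem (hu : u ∉ K) (hv : v ∉ K) :
    joinColor K s(u, v) = some (.inr (min u v)) := by
  simp [joinColor, hu, hv]

theorem joinColor_of_mem_of_notMem (hu : u ∈ K) (hv : v ∉ K) : joinColor K s(u, v) = none := by
  simp [joinColor, hu, hv]

theorem joinColor_of_notMem_of_mem (hu : u ∉ K) (hv : v ∈ K) : joinColor K s(u, v) = none := by
  rw [Sym2.eq_swap, joinColor_of_mem_of_notMem hv hu]

theorem joinColor_triangle_not_rainbow (u v : V) (hw : w ∉ K) :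
    joinColor K s(u, v) = joinColor K s(u, w) ∨
      joinColor K s(v, u) = joinColor K s(v, w) ∨
      joinColor K s(w, u) = joinColor K s(w, v) := by
  by_cases hu : u ∈ K <;> by_cases hv : v ∈ K
  · simp only [joinColor_of_notMem_of_mem hw hu, joinColor_of_notMem_of_mem hw hv, or_true]
  · simp only [joinColor_of_mem_of_notMem hu hv, joinColor_of_mem_of_notMem hu hw, true_or]
  · simp only [joinColor_of_mem_of_notMem hv hu, joinColor_of_mem_of_notMem hv hw, true_or, or_true]
  · have hmin : min u v = min u w ∨ min v u = min v w ∨ min w u = min w v := by grind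
    simpa only [joinColor_of_notMem_of_notMem, hu, hv, hw, not_false_eq_true, Option.some.injEq,
      Sum.inr.injEq] using hmin

theorem IsRainbowClique.subset_of_joinColor {G : SimpleGraph V} {f : Option (Sym2 V ⊕ V) → ℕ}
    {S : Finset V} (hS : IsRainbowClique G (f ∘ joinColor K) S) (hcard : 3 ≤ S.card) : S ⊆ K := by
  intro w hwS
  by_contra hw
  obtain ⟨u, hu, v, hv, huv⟩ : ∃ u ∈ S.erase w, ∃ v ∈ S.erase w, u ≠ v := by
    rw [← Finset.one_lt_card, Finset.card_erase_of_mem hwS]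
    lia
  obtain ⟨huw, huS⟩ := Finset.mem_erase.mp hu
  obtain ⟨hvw, hvS⟩ := Finset.mem_erase.mp hv
  rcases joinColor_triangle_not_rainbow u v hw with hC | hC | hC
  · exact hS.color_ne_of_common_vertex huS hvS hwS huv huw hvw (congrArg f hC)
  · exact hS.color_ne_of_common_vertex hvS huS hwS huv.symm hvw huw (congrArg f hC)
  · exact hS.color_ne_of_common_vertex hwS huS hvS huw.symm hvw.symm huv (congrArg f hC)

/-- The set of colors which `joinColor K` takes on the edges of the complete graph on `V`: the edges
inside `K`, the vertices outside `K` other than the largest one, and `none`. -/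
def joinPalette (K : Finset V) (hKc : Kᶜ.Nonempty) : Finset (Option (Sym2 V ⊕ V)) :=
  ((K.offDiag.image Sym2.mk.uncurry).disjSum (Kᶜ.erase (Kᶜ.max' hKc))).insertNone

theorem card_joinPalette (hKc : Kᶜ.Nonempty) :
    (joinPalette K hKc).card = K.card.choose 2 + Kᶜ.card := by
  rw [joinPalette, Finset.card_insertNone, Finset.card_disjSum, Sym2.card_image_offDiag, add_assoc,
    Finset.card_erase_add_one (Finset.max'_mem _ _)]

theorem joinColor_mem_joinPalette (hKc : Kᶜ.Nonempty) (huv : u ≠ v) :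
    joinColor K s(u, v) ∈ joinPalette K hKc := by
  by_cases hu : u ∈ K <;> by_cases hv : v ∈ K
  · rw [joinColor_of_mem_of_mem hu hv, joinPalette, Finset.some_mem_insertNone,
      Finset.inl_mem_disjSum]
    exact Finset.mem_image.mpr ⟨(u, v), Finset.mem_offDiag.mpr ⟨hu, hv, huv⟩, rfl⟩
  · rw [joinColor_of_mem_of_notMem hu hv]
    exact Finset.none_mem_insertNone
  · rw [joinColor_of_notMem_of_mem hu hv]
    exact Finset.none_mem_insertNone
  · rw [joinColor_of_notMem_of_notMem hu hv, joinPalette, Finset.some_mem_insertNone,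
      Finset.inr_mem_disjSum]
    exact min_mem_erase_max' hKc (Finset.mem_compl.mpr hu) (Finset.mem_compl.mpr hv) huv

theorem exists_joinColor_eq_of_mem_joinPalette (hK : K.Nonempty) (hKc : Kᶜ.Nonempty)
    {c : Option (Sym2 V ⊕ V)} (hc : c ∈ joinPalette K hKc) :
    ∃ u v, u ≠ v ∧ joinColor K s(u, v) = c := by
  have hmax : Kᶜ.max' hKc ∉ K := Finset.mem_compl.mp (Finset.max'_mem _ _)
  rcases c with _ | e | u
  · obtain ⟨u, hu⟩ := hK
    exact ⟨u, Kᶜ.max' hKc, ne_of_mem_of_not_mem hu hmax, joinColor_of_mem_of_notMem hu hmax⟩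
  · rw [joinPalette, Finset.some_mem_insertNone, Finset.inl_mem_disjSum, Finset.mem_image] at hc
    obtain ⟨⟨u, v⟩, huv, rfl⟩ := hc
    obtain ⟨hu, hv, hne⟩ := Finset.mem_offDiag.mp huv
    exact ⟨u, v, hne, joinColor_of_mem_of_mem hu hv⟩
  · rw [joinPalette, Finset.some_mem_insertNone, Finset.inr_mem_disjSum, Finset.mem_erase] at hc
    obtain ⟨hne, hu⟩ := hc
    refine ⟨u, Kᶜ.max' hKc, hne, ?_⟩
    rw [joinColor_of_notMem_of_notMem (Finset.mem_compl.mp hu) hmax,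
      min_eq_left (Finset.le_max' _ u hu)]

theorem image_joinColor_edgeSet_top (hK : K.Nonempty) (hKc : Kᶜ.Nonempty) :
    joinColor K '' (⊤ : SimpleGraph V).edgeSet = joinPalette K hKc := by
  ext c
  constructor
  · rintro ⟨⟨u, v⟩, huv, rfl⟩
    exact joinColor_mem_joinPalette hKc huv
  · intro hc
    obtain ⟨u, v, huv, rfl⟩ := exists_joinColor_eq_of_mem_joinPalette hK hKc hc
    exact Set.mem_image_of_mem _ huv

theorem card_image_joinColor_edgeSet_top (hK : K.Nonempty) (hKc : Kᶜ.Nonempty) :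
    Nat.card (joinColor K '' (⊤ : SimpleGraph V).edgeSet) = K.card.choose 2 + Kᶜ.card := by
  rw [image_joinColor_edgeSet_top hK hKc, Nat.card_coe_set_eq, Set.ncard_coe_finset,
    card_joinPalette]

end JoinColor

/-- For all `m ≥ 1` and `n ≥ 3m` there is an edge coloring of `K_n` with exactly
`n - 3m + C(3m-1, 2) + 1` colors and no `m` pairwise vertex-disjoint rainbow triangles. -/
theorem exists_coloring_join_no_disjoint_rainbow_triangles (m n : ℕ) (hm : 1 ≤ m)
    (hn : 3 * m ≤ n) :
    ∃ C : Sym2 (Fin n) → ℕ,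
      Nat.card (C '' (⊤ : SimpleGraph (Fin n)).edgeSet)
        = n - 3 * m + (3 * m - 1).choose 2 + 1 ∧
      ¬ ∃ S : Fin m → Finset (Fin n), (∀ i, (S i).card = 3) ∧
          (∀ i, IsRainbowClique (⊤ : SimpleGraph (Fin n)) C (S i)) ∧
          ∀ i j, i ≠ j → Disjoint (S i) (S j) := by
  obtain ⟨K, -, hK⟩ : ∃ K ⊆ (Finset.univ : Finset (Fin n)), K.card = 3 * m - 1 :=
    Finset.exists_subset_card_eq (by rw [Finset.card_fin]; lia)
  have hKc : Kᶜ.card = n - 3 * m + 1 := by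
    rw [Finset.card_compl, Fintype.card_fin, hK]
    lia
  obtain ⟨f, hf⟩ := exists_injective_nat (Option (Sym2 (Fin n) ⊕ Fin n))
  refine ⟨f ∘ joinColor K, ?_, ?_⟩
  · rw [Set.image_comp, Nat.card_image_of_injective hf,
      card_image_joinColor_edgeSet_top (Finset.card_pos.mp (by lia)) (Finset.card_pos.mp (by lia)),
      hK, hKc]
    lia
  · rintro ⟨S, hcard, hrainbow, hdisj⟩
    have hsub (i : Fin m) : S i ⊆ K := (hrainbow i).subset_of_joinColor (hcard i).ge
    have hle := card_mul_le_card_of_disjoint_of_subset (fun i ↦ (hcard i).ge) hdisj hsub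
    rw [Fintype.card_fin] at hle
    lia
end

section
/- Let G be an edge-colored complete graph, v a vertex of G, and S a finite set of vertices of G with v ∉ S. Suppose there are at least |S| + 2 edges incident to v whose colors are pairwise distinct and each of whose colors is saturated by {v}. Then there exist vertices u, w ∉ S ∪ {v} such that u, v, w form a rainbow triangle. -/
theorem Saturated.color_ne_of_adj {V : Type*} {G : SimpleGraph V} {C : Sym2 V → ℕ} {A : Set V}
    {R : ℕ} {u w : V} (hR : Saturated G C A R) (huw : G.Adj u w) (hu : u ∉ A) (hw : w ∉ A) :
    C s(u, w) ≠ R := by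
  intro hC
  obtain ⟨a, haA, ha⟩ := hR s(u, w) huw hC
  rcases Sym2.mem_iff.mp ha with rfl | rfl
  · exact hu haA
  · exact hw haA

theorem Saturated.rainbow_of_adj {V : Type*} {G : SimpleGraph V} {C : Sym2 V → ℕ} {u v w : V}
    (hu : Saturated G C {v} (C s(v, u))) (hw : Saturated G C {v} (C s(v, w)))
    (huw : G.Adj u w) (huv : u ≠ v) (hwv : w ≠ v) (hne : C s(v, u) ≠ C s(v, w)) :
    C s(u, v) ≠ C s(v, w) ∧ C s(u, v) ≠ C s(u, w) ∧ C s(v, w) ≠ C s(u, w) := by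
  rw [Sym2.eq_swap (a := u) (b := v)]
  exact ⟨hne, (hu.color_ne_of_adj huw huv hwv).symm, (hw.color_ne_of_adj huw huv hwv).symm⟩

theorem rainbow_triangle_avoiding_set_general {V : Type*} (C : Sym2 V → ℕ) (v : V) (S : Finset V)
    (h : ∃ T : Finset V, v ∉ T ∧ S.card + 2 ≤ T.card ∧
      (∀ u ∈ T, ∀ u' ∈ T, u ≠ u' → C s(v, u) ≠ C s(v, u')) ∧
      ∀ u ∈ T, Saturated (⊤ : SimpleGraph V) C {v} (C s(v, u))) :
    ∃ u w : V, u ∉ S ∧ w ∉ S ∧ u ≠ v ∧ w ≠ v ∧ u ≠ w ∧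
      C s(u, v) ≠ C s(v, w) ∧ C s(u, v) ≠ C s(u, w) ∧ C s(v, w) ≠ C s(u, w) := by
  classical
  obtain ⟨T, hvT, hcard, hdistinct, hsat⟩ := h
  have one_lt_card_sdiff : 1 < (T \ S).card := by
    have := Finset.le_card_sdiff S T
    omega
  obtain ⟨u, hu, w, hw, huw⟩ := Finset.one_lt_card.mp one_lt_card_sdiff
  obtain ⟨huT, huS⟩ := Finset.mem_sdiff.mp hu
  obtain ⟨hwT, hwS⟩ := Finset.mem_sdiff.mp hw
  have huv : u ≠ v := ne_of_mem_of_not_mem huT hvT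
  have hwv : w ≠ v := ne_of_mem_of_not_mem hwT hvT
  exact ⟨u, w, huS, hwS, huv, hwv, huw,
    (hsat u huT).rainbow_of_adj (hsat w hwT) huw huv hwv (hdistinct u huT w hwT huw)⟩

/-- In an edge-colored complete graph, if a vertex `v ∉ S` has at least `|S| + 2` incident
edges with pairwise distinct colors, each of whose colors is saturated by `{v}`, then there
are vertices `u, w ∉ S ∪ {v}` such that `u, v, w` form a rainbow triangle. -/
theorem rainbow_triangle_avoiding_set {V : Type*} [Fintype V] [DecidableEq V]
    (C : Sym2 V → ℕ) (v : V) (S : Finset V) (hvS : v ∉ S)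
    (h : ∃ T : Finset V, v ∉ T ∧ S.card + 2 ≤ T.card ∧
      (∀ u ∈ T, ∀ u' ∈ T, u ≠ u' → C s(v, u) ≠ C s(v, u')) ∧
      ∀ u ∈ T, Saturated (⊤ : SimpleGraph V) C {v} (C s(v, u))) :
    ∃ u w : V, u ∉ S ∧ w ∉ S ∧ u ≠ v ∧ w ≠ v ∧ u ≠ w ∧
      C s(u, v) ≠ C s(v, w) ∧ C s(u, v) ≠ C s(u, w) ∧ C s(v, w) ≠ C s(u, w) :=
  rainbow_triangle_avoiding_set_general C v S h
end
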